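/- arXiv:2102.08806 — 3 statements merged into one kernel-verified Lean document; each statement's English description precedes it below -/
import Mathlib

section
/- Let n ≥ 2, 2 ≤ p ≤ ∞, let γ : I → ℝⁿ be a smooth, injective, regular curve on a compact interval I, and let χ ∈ C_c^∞(ℝ) be nonnegative, not identically zero, and supported in the interior of I. Then there exists c > 0 (depending on p, γ, χ) such that for every λ ≥ 1 there exists a nonzero Schwartz function f on ℝⁿ belonging to Z_λ with ‖A_γ f‖_{L^p(ℝⁿ)} ≥ c λ^{−1/p} ‖f‖_{L^p(ℝⁿ)}. -/
open MeasureTheory Set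
open scoped FourierTransform RealInnerProductSpace ENNReal

noncomputable section

/-- Euclidean space ℝⁿ. -/
abbrev Euc (n : ℕ) := EuclideanSpace ℝ (Fin n)

/-- The averaging operator `A_γ f (x) = ∫ f(x - γ(s)) χ(s) ds`. -/
def avgOp {n : ℕ} (γ : ℝ → Euc n) (χ : ℝ → ℝ) (f : Euc n → ℂ) : Euc n → ℂ :=
  fun x => ∫ s : ℝ, f (x - γ s) * (χ s : ℂ)

/-- The `L^p` Sobolev norm `‖𝓕⁻¹[(1+|ξ|²)^{α/2} 𝓕 g]‖_{L^p}` of order `α`. -/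
def sobolevNorm {n : ℕ} (p : ℝ≥0∞) (α : ℝ) (g : Euc n → ℂ) : ℝ≥0∞ :=
  eLpNorm (𝓕⁻ (fun ξ : Euc n => (((1 + ‖ξ‖ ^ 2) ^ (α / 2) : ℝ) : ℂ) * 𝓕 g ξ)) p volume

/-- Non-degeneracy: `|det(γ'(s), …, γ⁽ⁿ⁾(s))| ≥ c₀ > 0` on `I`. -/
def NonDeg {n : ℕ} (γ : ℝ → Euc n) (I : Set ℝ) : Prop :=
  ∃ c₀ > (0 : ℝ), ∀ s ∈ I,
    c₀ ≤ |(Matrix.of fun i j : Fin n => iteratedDeriv ((j : ℕ) + 1) γ s i).det|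


/-- The Fourier multiplier of the averaging operator. -/
def mult {n : ℕ} (γ : ℝ → Euc n) (η : ℝ → ℝ) (ξ : Euc n) : ℂ :=
  ∫ s : ℝ, Complex.exp (↑(2 * Real.pi * -⟪γ s, ξ⟫) * Complex.I) * (η s : ℂ)

/-- the weighted measure `η(s) ds` -/
def wd (η : ℝ → ℝ) : Measure ℝ := volume.withDensity (fun s => ENNReal.ofReal (η s))

lemma wd_integral {η : ℝ → ℝ} (hη : Continuous η) (h0 : ∀ s, 0 ≤ η s) (g : ℝ → ℂ) :
    ∫ s, g s ∂(wd η) = ∫ s, g s * (η s : ℂ) := by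
  unfold wd
  rw [integral_withDensity_eq_integral_toReal_smul (by fun_prop) (by simp)]
  congr 1
  ext s
  rw [ENNReal.toReal_ofReal (h0 s), Complex.real_smul, mul_comm]

lemma wd_integrable {E : Type*} [NormedAddCommGroup E] [NormedSpace ℝ E]
    {η : ℝ → ℝ} (hη : Continuous η) (hc : HasCompactSupport η) (h0 : ∀ s, 0 ≤ η s)
    {g : ℝ → E} (hg : Continuous g) : Integrable g (wd η) := by
  unfold wd
  rw [integrable_withDensity_iff_integrable_smul' (by fun_prop) (by simp)]
  have : (fun x => (ENNReal.ofReal (η x)).toReal • g x) = fun x => η x • g x := by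
    ext s; rw [ENNReal.toReal_ofReal (h0 s)]
  rw [this]
  exact (hη.smul hg).integrable_of_hasCompactSupport hc.smul_right

lemma mult_contDiff {n : ℕ} {γ : ℝ → Euc n} (hγ : Continuous γ) {η : ℝ → ℝ} (hη : Continuous η)
    (hc : HasCompactSupport η) (h0 : ∀ s, 0 ≤ η s) :
    ContDiff ℝ (⊤ : ℕ∞) (mult γ η) := by
  have h := VectorFourier.contDiff_fourierIntegral (innerSL ℝ (E := Euc n))
    (f := fun _ => (1 : ℂ)) (μ := Measure.map γ (wd η)) (N := ⊤) (by
      intro k _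
      rw [integrable_map_measure (by fun_prop) (by fun_prop)]
      exact wd_integrable hη hc h0 (by simp only [Function.comp_def]; fun_prop))
  have e : mult γ η = VectorFourier.fourierIntegral Real.fourierChar (Measure.map γ (wd η))
      (ContinuousLinearMap.toLinearMap₁₂ (innerSL ℝ (E := Euc n))) (fun _ => (1 : ℂ)) := by
    ext ξ
    unfold mult VectorFourier.fourierIntegral
    rw [integral_map (by fun_prop) (by
      apply Continuous.aestronglyMeasurable
      change Continuous fun v : Euc n => (Real.fourierChar (-⟪v, ξ⟫)) • (1 : ℂ)
      simp only [Circle.smul_def]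
      fun_prop), wd_integral hη h0]
    simp [Circle.smul_def, Real.fourierChar_apply]
    rfl
  rw [e]
  exact h

lemma avg_schwartz {n : ℕ} {γ : ℝ → Euc n} (hγ : Continuous γ) {η : ℝ → ℝ} (hη : Continuous η)
    (hc : HasCompactSupport η) (h0 : ∀ s, 0 ≤ η s) (h : SchwartzMap (Euc n) ℂ)
    (hh : HasCompactSupport (𝓕 ⇑h)) :
    ∃ F : SchwartzMap (Euc n) ℂ, ⇑F = avgOp γ η ⇑h ∧ ∀ ξ, 𝓕 ⇑F ξ = mult γ η ξ * 𝓕 ⇑h ξ := by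
  have hsm : ContDiff ℝ (⊤ : ℕ∞) (fun ξ => mult γ η ξ * 𝓕 ⇑h ξ) := by
    apply (mult_contDiff hγ hη hc h0).mul
    rw [← SchwartzMap.fourier_coe]
    exact (𝓕 h).smooth ⊤
  have hcs : HasCompactSupport (fun ξ => mult γ η ξ * 𝓕 ⇑h ξ) := hh.mul_left
  let G : SchwartzMap (Euc n) ℂ := hcs.toSchwartzMap hsm
  have hG : ∀ ξ, G ξ = mult γ η ξ * 𝓕 ⇑h ξ := fun ξ => rfl
  refine ⟨𝓕⁻ G, ?_, ?_⟩
  swap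
  · intro ξ
    rw [← SchwartzMap.fourier_coe, FourierTransform.fourier_fourierInv_eq]
    exact hG ξ
  ext x
  have hinv : ∀ y, h y = ∫ ξ, Complex.exp (2 * Real.pi * ⟪ξ, y⟫ * Complex.I) * 𝓕 ⇑h ξ := by
    intro y
    have : h = 𝓕⁻ (𝓕 h) := (FourierTransform.fourierInv_fourier_eq h).symm
    conv_lhs => rw [this, SchwartzMap.fourierInv_coe, SchwartzMap.fourier_coe]
    rw [Real.fourierInv_eq']
    simp
  rw [SchwartzMap.fourierInv_coe, Real.fourierInv_eq']
  unfold avgOp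
  have e1 : ∀ ξ, Complex.exp (↑(2 * Real.pi * ⟪ξ, x⟫) * Complex.I) • G ξ =
      ∫ s, Complex.exp (↑(2 * Real.pi * ⟪ξ, x⟫) * Complex.I) *
        (Complex.exp (↑(2 * Real.pi * -⟪γ s, ξ⟫) * Complex.I) * (η s : ℂ) * 𝓕 ⇑h ξ) := by
    intro ξ
    rw [hG, mult, integral_const_mul, integral_mul_const, smul_eq_mul]
  have e2 : ∀ s, h (x - γ s) * (η s : ℂ) =
      ∫ ξ, Complex.exp (2 * Real.pi * ⟪ξ, x - γ s⟫ * Complex.I) * 𝓕 ⇑h ξ * (η s : ℂ) := by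
    intro s
    rw [integral_mul_const, ← hinv]
  simp_rw [e1, e2]
  rw [integral_integral_swap]
  · congr 1
    ext s
    congr 1
    ext ξ
    have : Complex.exp (2 * Real.pi * ⟪ξ, x - γ s⟫ * Complex.I) =
      Complex.exp (↑(2 * Real.pi * ⟪ξ, x⟫) * Complex.I) * Complex.exp (↑(2 * Real.pi * -⟪γ s, ξ⟫) * Complex.I) := by
      rw [← Complex.exp_add, inner_sub_right, real_inner_comm ξ (γ s)]
      push_cast
      ring_nf
    rw [this]
    ring
  · have hfc : Continuous (𝓕 ⇑h) := by
      rw [← SchwartzMap.fourier_coe]; exact (𝓕 h).continuous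
    have hmaj : Integrable (fun z : Euc n × ℝ => (𝓕 ⇑h z.1) * (η z.2 : ℂ)) (volume.prod volume) := by
      apply Integrable.mul_prod (f := fun z => 𝓕 ⇑h z) (g := fun s => (η s : ℂ))
      · exact hfc.integrable_of_hasCompactSupport hh
      · exact (hη.integrable_of_hasCompactSupport hc).ofReal
    refine hmaj.mono (Continuous.aestronglyMeasurable ?_) ?_
    · simp only [Function.uncurry_def]
      fun_prop
    · refine Filter.Eventually.of_forall fun z => ?_
      simp only [Function.uncurry_def, norm_mul, Complex.norm_exp_ofReal_mul_I]
      rw [one_mul, one_mul, mul_comm]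

lemma mult_ne {n : ℕ} (hn : 2 ≤ n) {γ : ℝ → Euc n} (hγ : Continuous γ) {η : ℝ → ℝ}
    (hη : Continuous η)
    (hc : HasCompactSupport η) (h0 : ∀ s, 0 ≤ η s) (hne : η ≠ 0) {r : ℝ} (hr : 0 < r) :
    ∃ ξ : Euc n, r / 2 < ‖ξ‖ ∧ ‖ξ‖ < 2 * r ∧ mult γ η ξ ≠ 0 := by
  by_contra! hcon
  let θ : Euc n := EuclideanSpace.single ⟨0, by omega⟩ (1 : ℝ)
  have hθ : ‖θ‖ = 1 := by simp [θ]
  let X : ℝ → ℝ := fun s => ⟪γ s, θ⟫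
  have hX : Continuous X := by fun_prop
  have hset : ProbabilityTheory.integrableExpSet X (wd η) = Set.univ := by
    ext t
    simp only [Set.mem_univ, iff_true]
    exact wd_integrable hη hc h0 (by fun_prop)
  have han := ProbabilityTheory.analyticOnNhd_complexMGF (X := X) (μ := wd η)
  rw [hset] at han
  simp only [interior_univ, Set.mem_univ, Set.ofPred_true] at han
  have hm : ∀ t : ℝ, ProbabilityTheory.complexMGF X (wd η) (((-(2 * Real.pi * t) : ℝ) : ℂ) * Complex.I)
      = mult γ η (t • θ) := by
    intro t
    unfold ProbabilityTheory.complexMGF mult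
    rw [wd_integral hη h0]
    congr 1
    ext s
    congr 2
    simp only [X, inner_smul_right]
    push_cast
    ring
  have hzero : Set.EqOn (ProbabilityTheory.complexMGF X (wd η)) 0 Set.univ := by
    refine han.eqOn_of_preconnected_of_frequently_eq (analyticOnNhd_const (v := 0)) isPreconnected_univ
      (z₀ := ((-(2 * Real.pi * r) : ℝ) : ℂ) * Complex.I) (Set.mem_univ _) ?_
    have ht : Filter.Tendsto (fun t : ℝ => ((-(2 * Real.pi * t) : ℝ) : ℂ) * Complex.I)
        (nhdsWithin r {r}ᶜ)
        (nhdsWithin (((-(2 * Real.pi * r) : ℝ) : ℂ) * Complex.I) {((-(2 * Real.pi * r) : ℝ) : ℂ) * Complex.I}ᶜ) := by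
      refine tendsto_nhdsWithin_of_tendsto_nhds_of_eventually_within _ ?_ ?_
      · refine (Continuous.tendsto ?_ r).mono_left nhdsWithin_le_nhds
        fun_prop
      · filter_upwards [self_mem_nhdsWithin] with t ht
        simp only [Set.mem_compl_iff, Set.mem_singleton_iff] at ht ⊢
        intro h
        apply ht
        have h1 := mul_right_cancel₀ Complex.I_ne_zero h
        have h2 : -(2 * Real.pi * t) = -(2 * Real.pi * r) := by exact_mod_cast h1
        have hpi := Real.pi_pos
        have : 2 * Real.pi * (t - r) = 0 := by linarith
        rcases mul_eq_zero.1 this with h3 | h3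
        · linarith
        · linarith
    refine ht.frequently (Filter.Eventually.frequently ?_)
    have hI : Set.Ioo (r / 2) (2 * r) ∈ nhdsWithin r {r}ᶜ :=
      nhdsWithin_le_nhds (Ioo_mem_nhds (by linarith) (by linarith))
    filter_upwards [hI] with t ht
    rw [hm]
    have htp : 0 < t := by have := ht.1; linarith
    apply hcon
    · rw [norm_smul, hθ, Real.norm_eq_abs, abs_of_pos htp, mul_one]; exact ht.1
    · rw [norm_smul, hθ, Real.norm_eq_abs, abs_of_pos htp, mul_one]; exact ht.2
  have h00 := hzero (Set.mem_univ (0 : ℂ))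
  unfold ProbabilityTheory.complexMGF at h00
  rw [wd_integral hη h0] at h00
  simp only [zero_mul, Complex.exp_zero, one_mul, Pi.zero_apply] at h00
  rw [integral_complex_ofReal] at h00
  have h01 : ∫ s, η s = 0 := by exact_mod_cast h00
  have : 0 < ∫ s, η s := by
    obtain ⟨s0, hs0⟩ := Function.ne_iff.1 hne
    exact integral_pos_of_integrable_nonneg_nonzero hη
      (hη.integrable_of_hasCompactSupport hc) h0 hs0
  linarith

lemma schwartz_eLpNorm_ne {n : ℕ} (p : ℝ≥0∞) (hp : 2 ≤ p) (F : SchwartzMap (Euc n) ℂ) (hF : F ≠ 0) :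
    eLpNorm (⇑F) p volume ≠ 0 := by
  intro h
  rw [eLpNorm_eq_zero_iff F.continuous.aestronglyMeasurable
    (by intro h; rw [h] at hp; simp at hp)] at h
  apply hF
  have := (F.continuous.ae_eq_iff_eq (μ := volume) continuous_const).1 h
  ext x
  exact congrFun this x

/-- The conclusion, restricted to frequencies in `S`. -/
def Good {n : ℕ} (p : ℝ≥0∞) (γ : ℝ → Euc n) (χ : ℝ → ℝ) (S : Set ℝ) : Prop :=
  ∃ c : ℝ, 0 < c ∧ ∀ lam ∈ S, 1 ≤ lam →
      ∃ f : SchwartzMap (Euc n) ℂ, f ≠ 0 ∧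
        tsupport (𝓕 ⇑f) ⊆ {ξ : Euc n | lam / 2 ≤ ‖ξ‖ ∧ ‖ξ‖ ≤ 2 * lam} ∧
        ENNReal.ofReal (c * lam ^ (-(1 / p).toReal)) * eLpNorm (⇑f) p volume ≤
          eLpNorm (avgOp γ χ ⇑f) p volume

lemma Good.union {n : ℕ} {p : ℝ≥0∞} {γ : ℝ → Euc n} {χ : ℝ → ℝ} {S T : Set ℝ}
    (hS : Good p γ χ S) (hT : Good p γ χ T) : Good p γ χ (S ∪ T) := by
  obtain ⟨c, hc, h⟩ := hS
  obtain ⟨d, hd, k⟩ := hT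
  refine ⟨min c d, lt_min hc hd, ?_⟩
  rintro lam (hl | hl) h1
  · obtain ⟨f, hf, hs, hb⟩ := h lam hl h1
    refine ⟨f, hf, hs, le_trans ?_ hb⟩
    gcongr
    exact min_le_left _ _
  · obtain ⟨f, hf, hs, hb⟩ := k lam hl h1
    refine ⟨f, hf, hs, le_trans ?_ hb⟩
    gcongr
    exact min_le_right _ _

/-- A Schwartz function whose Fourier transform is a given smooth compactly supported function. -/
lemma exists_ft {n : ℕ} {g : Euc n → ℂ} (hcs : HasCompactSupport g)
    (hsm : ContDiff ℝ (⊤ : ℕ∞) g) :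
    ∃ f : SchwartzMap (Euc n) ℂ, 𝓕 ⇑f = g ∧ ⇑f = 𝓕⁻ g := by
  let G : SchwartzMap (Euc n) ℂ := hcs.toSchwartzMap hsm
  refine ⟨𝓕⁻ G, ?_, ?_⟩
  · rw [← SchwartzMap.fourier_coe, FourierTransform.fourier_fourierInv_eq]
    rfl
  · rw [SchwartzMap.fourierInv_coe]
    rfl

lemma exists_bump {n : ℕ} (ξ : Euc n) {r : ℝ} (hr : 0 < r) :
    ∃ f : SchwartzMap (Euc n) ℂ, tsupport (𝓕 ⇑f) ⊆ Metric.closedBall ξ r ∧ 𝓕 ⇑f ξ = 1 := by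
  let g : ContDiffBump ξ := ⟨r / 2, r, by linarith, by linarith⟩
  have hcs : HasCompactSupport (fun x => ((g x : ℝ) : ℂ)) :=
    g.hasCompactSupport.comp_left (g := fun x : ℝ => (x : ℂ)) (by simp)
  have hsm : ContDiff ℝ (⊤ : ℕ∞) (fun x => ((g x : ℝ) : ℂ)) :=
    Complex.ofRealCLM.contDiff.comp g.contDiff
  obtain ⟨f, hf, -⟩ := exists_ft hcs hsm
  refine ⟨f, ?_, ?_⟩
  · rw [hf]
    refine (tsupport_comp_subset (g := fun x : ℝ => (x : ℂ)) (by simp) _).trans ?_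
    rw [g.tsupport_eq]
  · rw [hf]
    simp [g.one_of_mem_closedBall (Metric.mem_closedBall_self g.rIn_pos.le)]

lemma good_local {n : ℕ} (hn : 2 ≤ n) (p : ℝ≥0∞) (hp : 2 ≤ p) {γ : ℝ → Euc n}
    (hγ : Continuous γ) {η : ℝ → ℝ} (hη : Continuous η)
    (hc : HasCompactSupport η) (h0 : ∀ s, 0 ≤ η s) (hne : η ≠ 0) {r : ℝ} (hr : 0 < r) :
    ∃ t ∈ nhds r, Good p γ η t := by
  obtain ⟨ξ, h1, h2, h3⟩ := mult_ne hn hγ hη hc h0 hne hr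
  obtain ⟨δ, hδ, hδ1, hδ2⟩ : ∃ δ > 0, r / 2 < ‖ξ‖ - δ ∧ ‖ξ‖ + δ < 2 * r := by
    refine ⟨min (‖ξ‖ - r / 2) (2 * r - ‖ξ‖) / 2, ?_, ?_, ?_⟩
    · have := lt_min (sub_pos.2 h1) (sub_pos.2 h2)
      linarith
    · have := min_le_left (‖ξ‖ - r / 2) (2 * r - ‖ξ‖)
      linarith
    · have := min_le_right (‖ξ‖ - r / 2) (2 * r - ‖ξ‖)
      linarith
  obtain ⟨f, hfs, hf1⟩ := exists_bump ξ hδ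
  have hcf : HasCompactSupport (𝓕 ⇑f) :=
    HasCompactSupport.of_support_subset_isCompact (isCompact_closedBall ξ δ)
      ((subset_tsupport _).trans hfs)
  obtain ⟨F, hF, hFF⟩ := avg_schwartz hγ hη hc h0 f hcf
  have hf0 : f ≠ 0 := by
    rintro rfl
    rw [← SchwartzMap.fourier_coe] at hf1
    simp at hf1
  have hF0 : F ≠ 0 := by
    rintro rfl
    have := hFF ξ
    rw [hf1, ← SchwartzMap.fourier_coe] at this
    simp at this
    exact h3 this.symm
  have hA := schwartz_eLpNorm_ne p hp F hF0
  have hB := schwartz_eLpNorm_ne p hp f hf0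
  have hAt : eLpNorm (⇑F) p volume ≠ ⊤ := (F.memLp p volume).eLpNorm_ne_top
  have hBt : eLpNorm (⇑f) p volume ≠ ⊤ := (f.memLp p volume).eLpNorm_ne_top
  refine ⟨Set.Ioo ((‖ξ‖ + δ) / 2) (2 * (‖ξ‖ - δ)), Ioo_mem_nhds (by linarith) (by linarith), ?_⟩
  refine ⟨(eLpNorm (⇑F) p volume / eLpNorm (⇑f) p volume).toReal, ?_, ?_⟩
  · apply ENNReal.toReal_pos
    · simp [hA, hBt]
    · exact ENNReal.div_ne_top hAt hB
  · intro lam hl h1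
    refine ⟨f, hf0, ?_, ?_⟩
    · refine hfs.trans ?_
      intro x hx
      rw [mem_closedBall_iff_norm] at hx
      have := norm_sub_norm_le x ξ
      have h5 := norm_sub_norm_le ξ x
      rw [norm_sub_rev] at h5
      constructor
      · linarith [hl.2]
      · linarith [hl.1]
    · rw [← hF]
      calc _ ≤ (eLpNorm (⇑F) p volume / eLpNorm (⇑f) p volume) * eLpNorm (⇑f) p volume := by
            gcongr
            refine ENNReal.ofReal_le_of_le_toReal ?_
            apply mul_le_of_le_one_right ENNReal.toReal_nonneg
            apply Real.rpow_le_one_of_one_le_of_nonpos h1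
            simp
        _ = _ := ENNReal.div_mul_cancel hB hBt

lemma good_Icc {n : ℕ} (hn : 2 ≤ n) (p : ℝ≥0∞) (hp : 2 ≤ p) {γ : ℝ → Euc n}
    (hγ : Continuous γ) {η : ℝ → ℝ} (hη : Continuous η)
    (hc : HasCompactSupport η) (h0 : ∀ s, 0 ≤ η s) (hne : η ≠ 0) (R : ℝ) :
    Good p γ η (Set.Icc 1 R) := by
  refine isCompact_Icc.induction_on (p := Good p γ η) ⟨1, one_pos, by simp⟩ ?_ ?_ ?_
  · rintro s t hst ⟨c, hc, h⟩
    exact ⟨c, hc, fun l hl => h l (hst hl)⟩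
  · intro s t hs ht
    exact hs.union ht
  · intro x hx
    obtain ⟨t, ht, h⟩ := good_local hn p hp hγ hη hc h0 hne (r := x) (by linarith [hx.1])
    exact ⟨t, mem_nhdsWithin_of_mem_nhds ht, h⟩

lemma exists_psi {n : ℕ} (ω : Euc n) :
    ∃ (ψ : SchwartzMap (Euc n) ℂ) (q : Euc n → ℝ), tsupport (𝓕 ⇑ψ) ⊆ Metric.closedBall ω (1 / 2) ∧
      q 0 ≠ 0 ∧ Continuous q ∧
      ∀ y, ψ y = Complex.exp (2 * Real.pi * ⟪ω, y⟫ * Complex.I) * (((q y) ^ 2 : ℝ) : ℂ) := by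
  let g : ContDiffBump (0 : Euc n) := ⟨1 / 8, 1 / 4, by norm_num, by norm_num⟩
  have hcs : HasCompactSupport (fun x => ((g x : ℝ) : ℂ)) :=
    g.hasCompactSupport.comp_left (g := fun x : ℝ => (x : ℂ)) (by simp)
  have hsm : ContDiff ℝ (⊤ : ℕ∞) (fun x => ((g x : ℝ) : ℂ)) :=
    Complex.ofRealCLM.contDiff.comp g.contDiff
  let U : SchwartzMap (Euc n) ℂ := hcs.toSchwartzMap hsm
  have hU : ∀ x, U x = ((g x : ℝ) : ℂ) := fun x => rfl
  let W : SchwartzMap (Euc n) ℂ := SchwartzMap.convolution (ContinuousLinearMap.mul ℂ ℂ) U U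
  have hW : ∀ ξ, 𝓕 ⇑W ξ = 𝓕 ⇑U ξ * 𝓕 ⇑U ξ := by
    intro ξ
    rw [← SchwartzMap.fourier_coe, SchwartzMap.fourier_convolution]
    simp [SchwartzMap.fourier_coe]
  have hWs : Function.support W ⊆ Metric.closedBall 0 (1 / 2) := by
    intro x hx
    rw [Function.mem_support, SchwartzMap.convolution_apply] at hx
    obtain ⟨y, hy, z, hz, rfl⟩ := support_convolution_subset _ hx
    have hy' : y ∈ Function.support g := by
      simpa [hU] using hy
    have hz' : z ∈ Function.support g := by
      simpa [hU] using hz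
    rw [g.support_eq] at hy' hz'
    simp only [Metric.mem_ball, dist_zero_right, g] at hy' hz'
    rw [mem_closedBall_zero_iff]
    exact (norm_add_le _ _).trans (by linarith)
  have hGs : Function.support (fun ξ => W (ξ - ω)) ⊆ Metric.closedBall ω (1 / 2) := by
    intro ξ hξ
    have := hWs (a := ξ - ω) hξ
    rw [mem_closedBall_iff_norm]
    simpa using this
  have hGc : HasCompactSupport (fun ξ => W (ξ - ω)) :=
    HasCompactSupport.of_support_subset_isCompact (isCompact_closedBall _ _) hGs
  have hGsm : ContDiff ℝ (⊤ : ℕ∞) (fun ξ => W (ξ - ω)) :=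
    (W.smooth ⊤).comp (contDiff_id.sub contDiff_const)
  obtain ⟨ψ, hψ, hψ'⟩ := exists_ft hGc hGsm
  have hreal : ∀ y, 𝓕 ⇑U y = (((𝓕 ⇑U y).re : ℝ) : ℂ) := by
    intro y
    rw [eq_comm, ← Complex.conj_eq_iff_re, Real.fourier_eq', ← integral_conj, ← integral_neg_eq_self]
    congr 1
    ext v
    have h2 : (starRingEnd ℂ) 2 = 2 := map_ofNat _ 2
    simp [hU, ← Complex.exp_conj, h2, g.neg]
  refine ⟨ψ, fun y => (𝓕 ⇑U (-y)).re, ?_, ?_, ?_, ?_⟩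
  · rw [hψ]
    exact closure_minimal hGs Metric.isClosed_closedBall
  · have h1 : 𝓕 ⇑U 0 = ((∫ x, g x : ℝ) : ℂ) := by
      rw [Real.fourier_eq', ← integral_complex_ofReal]
      simp [hU]
    simp only [neg_zero]
    rw [h1, Complex.ofReal_re]
    exact g.integral_pos.ne'
  · have : Continuous (𝓕 ⇑U) := by rw [← SchwartzMap.fourier_coe]; exact (𝓕 U).continuous
    fun_prop
  · intro y
    rw [hψ', Real.fourierInv_eq', ← integral_add_right_eq_self _ ω]
    have h2 : (((𝓕 ⇑U (-y)).re ^ 2 : ℝ) : ℂ) = 𝓕 ⇑W (-y) := by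
      rw [hW, Complex.ofReal_pow, ← hreal, sq]
    rw [h2, Real.fourier_eq', ← integral_const_mul]
    congr 1
    ext v
    rw [smul_eq_mul, smul_eq_mul, ← mul_assoc, ← Complex.exp_add, add_sub_cancel_right, inner_add_left,
      inner_neg_right]
    congr 2
    push_cast
    ring

/-- bi-Lipschitz lower bound -/
lemma bilip {n : ℕ} {a b : ℝ} {γ : ℝ → Euc n} (hγ : ContDiff ℝ (⊤ : ℕ∞) γ)
    (hinj : Set.InjOn γ (Set.Icc a b))
    (hreg : ∀ s ∈ Set.Icc a b, deriv γ s ≠ 0) :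
    ∃ c : ℝ, 0 < c ∧ (∀ s ∈ Set.Icc a b, ∀ t ∈ Set.Icc a b, c * |t - s| ≤ ‖γ t - γ s‖) ∧
      ∀ s ∈ Set.Icc a b, c ≤ ‖deriv γ s‖ := by
  have hd : Continuous (deriv γ) := hγ.continuous_deriv (by simp)
  have hdiff : Differentiable ℝ γ := hγ.differentiable (by simp)
  let Q : ℝ × ℝ → Euc n := fun z => ∫ u in (0 : ℝ)..1, deriv γ (z.1 + u * (z.2 - z.1))
  have hQ : Continuous Q := by
    apply intervalIntegral.continuous_parametric_intervalIntegral_of_continuous'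
    simp only [Function.uncurry_def]
    fun_prop
  have hQe : ∀ s t, (t - s) • Q (s, t) = γ t - γ s := by
    intro s t
    have := intervalIntegral.integral_eq_sub_of_hasDerivAt (a := 0) (b := 1)
      (f := fun u => γ (s + u * (t - s))) (f' := fun u => (t - s) • deriv γ (s + u * (t - s)))
      (by
        intro x _
        have h1 : HasDerivAt (fun u => s + u * (t - s)) (t - s) x := by
          simpa using ((hasDerivAt_id x).mul_const (t - s)).const_add s
        exact (hdiff _).hasDerivAt.scomp x h1)
      (by apply Continuous.intervalIntegrable; fun_prop)
    rw [intervalIntegral.integral_smul] at this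
    simpa using this
  rcases (Set.Icc a b).eq_empty_or_nonempty with he | ⟨s0, hs0⟩
  · exact ⟨1, one_pos, by simp [he]⟩
  obtain ⟨z, hz, hmin⟩ := (isCompact_Icc.prod isCompact_Icc).exists_isMinOn
    (s := Set.Icc a b ×ˢ Set.Icc a b) ⟨(s0, s0), hs0, hs0⟩ hQ.norm.continuousOn
  refine ⟨‖Q z‖, ?_, ?_, ?_⟩
  · rw [norm_pos_iff]
    intro h0
    obtain ⟨s, t⟩ := z
    by_cases hst : s = t
    · subst hst
      simp only [Q, sub_self, mul_zero, add_zero, intervalIntegral.integral_const, sub_zero, one_smul] at h0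
      exact hreg s hz.1 h0
    · have := hQe s t
      rw [h0, smul_zero, eq_comm, sub_eq_zero] at this
      exact hst (hinj hz.2 hz.1 this).symm
  · intro s hs t ht
    rw [← hQe, norm_smul, Real.norm_eq_abs, mul_comm]
    gcongr
    exact hmin (Set.mk_mem_prod hs ht)
  · intro s hs
    have h1 : ‖Q z‖ ≤ ‖Q (s, s)‖ := hmin (Set.mk_mem_prod hs hs)
    simpa [Q] using h1

/-- decay of Schwartz functions -/
lemma decay2 {n : ℕ} (ψ : SchwartzMap (Euc n) ℂ) :
    ∃ C : ℝ, 0 < C ∧ ∀ y, (1 + ‖y‖) ^ 2 * ‖ψ y‖ ≤ C := by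
  have h := fun y => SchwartzMap.one_add_le_sup_seminorm_apply (𝕜 := ℝ) (m := (2, 0)) (k := 2) (n := 0)
    le_rfl le_rfl ψ y
  simp only [norm_iteratedFDeriv_zero] at h
  refine ⟨_ + 1, ?_, fun y => (h y).trans (le_add_of_nonneg_right zero_le_one)⟩
  have : 0 ≤ (1 + ‖(0 : Euc n)‖) ^ 2 * ‖ψ 0‖ := by positivity
  linarith [h 0]

lemma decay_bound {n : ℕ} {ψ : SchwartzMap (Euc n) ℂ} {C : ℝ} (hC : ∀ y, (1 + ‖y‖) ^ 2 * ‖ψ y‖ ≤ C)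
    (z : Euc n) (k : ℝ) (hk : |k| ≤ 1 + ‖z‖) : ‖ψ z‖ ≤ 2 * C * (1 + k ^ 2)⁻¹ := by
  have h1 : (1 + k ^ 2) ≤ 2 * (1 + ‖z‖) ^ 2 := by
    have := norm_nonneg z
    have h2 : k ^ 2 ≤ (1 + ‖z‖) ^ 2 := by
      rw [← sq_abs k]; gcongr
    nlinarith
  rw [← div_eq_mul_inv, le_div_iff₀ (by positivity)]
  have := hC z
  nlinarith [norm_nonneg (ψ z)]

lemma integrable_cauchy {k : ℝ} (hk : k ≠ 0) : Integrable (fun r : ℝ => (1 + (k * r) ^ 2)⁻¹) :=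
  integrable_inv_one_add_sq.comp_mul_left' hk

lemma sup_bound {n : ℕ} {a b : ℝ} (hab : a < b) {γ : ℝ → Euc n} (hγ : Continuous γ)
    {c : ℝ} (hc : 0 < c)
    (hbl : ∀ s ∈ Set.Icc a b, ∀ t ∈ Set.Icc a b, c * |t - s| ≤ ‖γ t - γ s‖)
    {η : ℝ → ℝ} (h0 : ∀ s, 0 ≤ η s) (h1 : ∀ s, η s ≤ 1)
    (hs : ∀ s, η s ≠ 0 → s ∈ Set.Icc a b) (ψ : SchwartzMap (Euc n) ℂ) :
    ∃ M : ℝ, 0 < M ∧ ∀ lam : ℝ, 0 < lam → ∀ x,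
      ‖avgOp (fun s => - γ s) η (fun y => (lam : ℂ) * ψ (lam • y)) x‖ ≤ M := by
  obtain ⟨C, hC0, hC⟩ := decay2 ψ
  refine ⟨4 * C * Real.pi / c, by positivity, ?_⟩
  intro lam hl x
  obtain ⟨t0, ht0, hmin⟩ := isCompact_Icc.exists_isMinOn (s := Set.Icc a b) ⟨a, by simp [hab.le]⟩
    (f := fun t => ‖x + γ t‖) (by fun_prop)
  have hk : 0 < lam * (c / 2) := by positivity
  have hval : ∫ t, lam * (2 * C) * (1 + (lam * (c / 2) * (t - t0)) ^ 2)⁻¹ = 4 * C * Real.pi / c := by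
    rw [integral_const_mul,
      integral_sub_right_eq_self (fun t => (1 + (lam * (c / 2) * t) ^ 2)⁻¹) t0,
      Measure.integral_comp_mul_left (fun t => (1 + t ^ 2)⁻¹), integral_univ_inv_one_add_sq,
      abs_of_pos (by positivity), smul_eq_mul]
    field_simp
    ring
  rw [← hval]
  unfold avgOp
  refine norm_integral_le_of_norm_le ?_ (Filter.Eventually.of_forall fun t => ?_)
  · exact ((integrable_cauchy hk.ne').comp_sub_right t0).const_mul _
  · by_cases hη : η t = 0
    · simp only [hη]
      simp
      positivity
    · have ht := hs t hη
      have hm : ‖x + γ t0‖ ≤ ‖x + γ t‖ := hmin ht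
      have h2 : c * |t - t0| ≤ 2 * ‖x + γ t‖ := by
        refine (hbl t0 ht0 t ht).trans ?_
        have : γ t - γ t0 = (x + γ t) - (x + γ t0) := by abel
        rw [this]
        refine (norm_sub_le _ _).trans ?_
        linarith
      have h3 := decay_bound hC (lam • (x + γ t)) (lam * (c / 2) * (t - t0)) (by
        rw [abs_mul, abs_of_pos hk, norm_smul, Real.norm_eq_abs, abs_of_pos hl]
        nlinarith)
      rw [norm_mul, norm_mul, Complex.norm_real, Complex.norm_real, Real.norm_eq_abs, Real.norm_eq_abs,
        abs_of_pos hl, abs_of_nonneg (h0 t), sub_neg_eq_add]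
      calc lam * ‖ψ (lam • (x + γ t))‖ * η t ≤ lam * ‖ψ (lam • (x + γ t))‖ * 1 := by
            gcongr; exact h1 t
        _ ≤ lam * (2 * C * (1 + (lam * (c / 2) * (t - t0)) ^ 2)⁻¹) * 1 := by gcongr
        _ = _ := by ring

lemma l1_bound {n : ℕ} {γ : ℝ → Euc n} (hγ : Continuous γ) {η : ℝ → ℝ} (hη : Continuous η)
    {h : Euc n → ℂ} (hh : Continuous h) :
    ∫⁻ x, ‖avgOp γ η h x‖ₑ ≤ (∫⁻ s, ‖η s‖ₑ) * ∫⁻ x, ‖h x‖ₑ := by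
  calc ∫⁻ x, ‖avgOp γ η h x‖ₑ ≤ ∫⁻ x, ∫⁻ s, ‖h (x - γ s)‖ₑ * ‖η s‖ₑ := by
        gcongr with x
        refine (enorm_integral_le_lintegral_enorm _).trans (le_of_eq ?_)
        congr 1
        ext s
        rw [enorm_mul]
        congr 1
        simp [enorm_eq_nnnorm]
    _ = ∫⁻ s, ∫⁻ x, ‖h (x - γ s)‖ₑ * ‖η s‖ₑ := by
        rw [lintegral_lintegral_swap]
        have e1 : Continuous fun z : Euc n × ℝ => h (z.1 - γ z.2) := by fun_prop
        have e2 : Continuous fun z : Euc n × ℝ => η z.2 := by fun_prop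
        exact (e1.enorm.measurable.mul e2.enorm.measurable).aemeasurable
    _ = ∫⁻ s, ‖η s‖ₑ * ∫⁻ x, ‖h x‖ₑ := by
        congr 1
        ext s
        have e1 : Continuous fun x => h (x - γ s) := by fun_prop
        rw [lintegral_mul_const _ e1.enorm.measurable, mul_comm, lintegral_sub_right_eq_self (fun x => ‖h x‖ₑ)]
    _ = _ := by
        rw [lintegral_mul_const _ (by fun_prop)]

lemma interp {n : ℕ} (p : ℝ≥0∞) (hp : 2 ≤ p) (F : Euc n → ℂ) {M : ℝ}
    (hM : ∀ x, ‖F x‖ ≤ M) {N : ℝ≥0∞} (hN : ∫⁻ x, ‖F x‖ₑ ≤ N) :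
    eLpNorm F p volume ≤ ENNReal.ofReal M ^ (1 - 1 / p.toReal) * N ^ (1 / p.toReal) := by
  by_cases hpt : p = ⊤
  · subst hpt
    simp only [ENNReal.toReal_top, div_zero, sub_zero, ENNReal.rpow_one, ENNReal.rpow_zero, mul_one,
      eLpNorm_exponent_top]
    exact eLpNormEssSup_le_of_ae_bound (Filter.Eventually.of_forall hM)
  have hp0 : p ≠ 0 := by rintro rfl; simp at hp
  have hq : 2 ≤ p.toReal := by
    have := (ENNReal.toReal_le_toReal (by simp) hpt).2 hp
    simpa using this
  set q := p.toReal
  rw [eLpNorm_eq_lintegral_rpow_enorm_toReal hp0 hpt]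
  have h1 : ∫⁻ x, ‖F x‖ₑ ^ q ≤ ENNReal.ofReal M ^ (q - 1) * N := by
    calc ∫⁻ x, ‖F x‖ₑ ^ q ≤ ∫⁻ x, ENNReal.ofReal M ^ (q - 1) * ‖F x‖ₑ := by
          gcongr with x
          have : ‖F x‖ₑ ^ q = ‖F x‖ₑ ^ (q - 1) * ‖F x‖ₑ := by
            conv_lhs => rw [show q = (q - 1) + 1 by ring]
            rw [ENNReal.rpow_add_of_nonneg _ _ (by linarith) zero_le_one, ENNReal.rpow_one]
          rw [this]
          gcongr
          · linarith
          · rw [← ofReal_norm]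
            exact ENNReal.ofReal_le_ofReal (hM x)
      _ = ENNReal.ofReal M ^ (q - 1) * ∫⁻ x, ‖F x‖ₑ := by
          rw [lintegral_const_mul' _ _ (ENNReal.rpow_ne_top_of_nonneg (by linarith) (by simp))]
      _ ≤ _ := by gcongr
  calc _ ≤ (ENNReal.ofReal M ^ (q - 1) * N) ^ (1 / q) := by gcongr
    _ = _ := by
      rw [ENNReal.mul_rpow_of_nonneg _ _ (by positivity), ← ENNReal.rpow_mul]
      congr 2
      field_simp

lemma lower {n : ℕ} (p : ℝ≥0∞) (hp : 2 ≤ p) (A : Euc n → ℂ) {c δ lam : ℝ} (hδ : 0 < δ)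
    (hl : 0 < lam) (hc : 0 < c) (hA : ∀ x, ‖x‖ < lam⁻¹ * δ → c ≤ ‖A x‖) :
    ENNReal.ofReal (c * (lam⁻¹ ^ n * (volume (Metric.ball (0 : Euc n) δ)).toReal) ^ (1 / p.toReal))
      ≤ eLpNorm A p volume := by
  have hp0 : p ≠ 0 := by rintro rfl; simp at hp
  have hpos : 0 < lam⁻¹ * δ := by positivity
  have h1 := eLpNorm_indicator_const' (p := p) (μ := (volume : Measure (Euc n))) (c := c)
    (s := Metric.ball (0 : Euc n) (lam⁻¹ * δ))
    Metric.isOpen_ball.measurableSet (Metric.measure_ball_pos _ _ hpos).ne' hp0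
  have h2 : eLpNorm ((Metric.ball (0 : Euc n) (lam⁻¹ * δ)).indicator fun _ => c) p volume ≤
      eLpNorm A p volume := by
    apply eLpNorm_mono
    intro x
    by_cases hx : x ∈ Metric.ball (0 : Euc n) (lam⁻¹ * δ)
    · rw [Set.indicator_of_mem hx, Real.norm_eq_abs, abs_of_pos hc]
      exact hA x (by simpa using hx)
    · rw [Set.indicator_of_notMem hx]
      simp
  refine le_trans (le_of_eq ?_) h2
  rw [h1, Measure.addHaar_ball_mul_of_pos _ _ (by positivity), finrank_euclideanSpace_fin,
    ENNReal.ofReal_mul hc.le, ← ENNReal.ofReal_rpow_of_nonneg (by positivity) (by positivity),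
    ENNReal.ofReal_mul (by positivity), ENNReal.ofReal_toReal measure_ball_lt_top.ne,
    Real.enorm_eq_ofReal hc.le]

/-- The rescaled kernel integrand. -/
def ker {n : ℕ} (γ : ℝ → Euc n) (η χ : ℝ → ℝ) (ψ : Euc n → ℂ) (ε : ℝ) (y : Euc n) (w : ℝ × ℝ) : ℂ :=
  ψ (y + ε⁻¹ • (γ (w.1 + ε * w.2) - γ w.1)) * (η (w.1 + ε * w.2) : ℂ) * (χ w.1 : ℂ)

lemma ker_cont {n : ℕ} {γ : ℝ → Euc n} (hγ : Continuous γ) {η χ : ℝ → ℝ} (hη : Continuous η)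
    (hχ : Continuous χ) {ψ : Euc n → ℂ} (hψ : Continuous ψ) (ε : ℝ) (y : Euc n) :
    Continuous (ker γ η χ ψ ε y) := by
  unfold ker
  fun_prop

lemma ker_bound {n : ℕ} {a b : ℝ} {γ : ℝ → Euc n}
    {c : ℝ} (hc : 0 < c)
    (hbl : ∀ s ∈ Set.Icc a b, ∀ t ∈ Set.Icc a b, c * |t - s| ≤ ‖γ t - γ s‖)
    {η χ : ℝ → ℝ} (h0 : ∀ s, 0 ≤ η s) (h1 : ∀ s, η s ≤ 1)
    (hs : ∀ s, η s ≠ 0 → s ∈ Set.Icc a b) (hχ0 : ∀ s, 0 ≤ χ s) (hχs : ∀ s, χ s ≠ 0 → s ∈ Set.Icc a b)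
    {ψ : SchwartzMap (Euc n) ℂ} {C : ℝ} (hC0 : 0 < C) (hC : ∀ y, (1 + ‖y‖) ^ 2 * ‖ψ y‖ ≤ C)
    {ε : ℝ} (hε : 0 < ε) {y : Euc n} (hy : ‖y‖ ≤ 1) (w : ℝ × ℝ) :
    ‖ker γ η χ ψ ε y w‖ ≤ χ w.1 * (2 * C * (1 + (c * w.2) ^ 2)⁻¹) := by
  obtain ⟨s, r⟩ := w
  unfold ker
  simp only
  have hR : 0 ≤ χ s * (2 * C * (1 + (c * r) ^ 2)⁻¹) := by
    have := hχ0 s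
    positivity
  by_cases hχ : χ s = 0
  · simp [hχ]
  by_cases hη : η (s + ε * r) = 0
  · simpa [hη] using hR
  have h2 := hbl s (hχs s hχ) _ (hs _ hη)
  have h3 : c * |r| ≤ ‖ε⁻¹ • (γ (s + ε * r) - γ s)‖ := by
    rw [norm_smul, Real.norm_eq_abs, abs_of_pos (inv_pos.2 hε), le_inv_mul_iff₀ hε]
    refine le_trans (le_of_eq ?_) h2
    rw [add_sub_cancel_left, abs_mul, abs_of_pos hε]
    ring
  have h4 : |c * r| ≤ 1 + ‖y + ε⁻¹ • (γ (s + ε * r) - γ s)‖ := by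
    rw [abs_mul, abs_of_pos hc]
    have := norm_sub_le (y + ε⁻¹ • (γ (s + ε * r) - γ s)) y
    rw [add_sub_cancel_left] at this
    linarith
  have h5 := decay_bound hC _ _ h4
  rw [norm_mul, norm_mul, Complex.norm_real, Complex.norm_real, Real.norm_eq_abs, Real.norm_eq_abs,
    abs_of_nonneg (h0 _), abs_of_nonneg (hχ0 _)]
  have := hχ0 s
  calc _ ≤ (2 * C * (1 + (c * r) ^ 2)⁻¹) * 1 * χ s := by
        gcongr
        · exact h0 _
        · exact h1 _
    _ = _ := by ring

lemma bound_integrable {χ : ℝ → ℝ} (hχ : Continuous χ) (hχc : HasCompactSupport χ) {c C : ℝ} (hc : 0 < c) :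
    Integrable (fun w : ℝ × ℝ => χ w.1 * (2 * C * (1 + (c * w.2) ^ 2)⁻¹)) (volume.prod volume) := by
  exact Integrable.mul_prod (f := χ) (g := fun r => 2 * C * (1 + (c * r) ^ 2)⁻¹)
    (hχ.integrable_of_hasCompactSupport hχc) ((integrable_cauchy hc.ne').const_mul _)

lemma ker_tendsto {n : ℕ} {γ : ℝ → Euc n} (hγ : ContDiff ℝ (⊤ : ℕ∞) γ)
    {η χ : ℝ → ℝ} (hη : Continuous η) {ψ : Euc n → ℂ} (hψ : Continuous ψ) (w : ℝ × ℝ) :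
    Filter.Tendsto (fun z : ℝ × Euc n => ker γ η χ ψ z.1 z.2 w) (nhdsWithin 0 (Set.Ioi 0) ×ˢ nhds 0)
      (nhds (ψ (w.2 • deriv γ w.1) * (η w.1 : ℂ) * (χ w.1 : ℂ))) := by
  obtain ⟨s, r⟩ := w
  unfold ker
  simp only
  have hfst : Filter.Tendsto (fun z : ℝ × Euc n => z.1) (nhdsWithin 0 (Set.Ioi 0) ×ˢ nhds 0)
      (nhdsWithin 0 (Set.Ioi 0)) := Filter.tendsto_fst
  have hfst0 : Filter.Tendsto (fun z : ℝ × Euc n => z.1) (nhdsWithin 0 (Set.Ioi 0) ×ˢ nhds 0)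
      (nhds 0) := hfst.mono_right nhdsWithin_le_nhds
  have hsnd : Filter.Tendsto (fun z : ℝ × Euc n => z.2) (nhdsWithin (0 : ℝ) (Set.Ioi 0) ×ˢ nhds 0)
      (nhds 0) := Filter.tendsto_snd
  have hder : Filter.Tendsto (fun ε : ℝ => ε⁻¹ • (γ (s + ε * r) - γ s)) (nhdsWithin 0 (Set.Ioi 0))
      (nhds (r • deriv γ s)) := by
    have h1 : HasDerivAt (fun u : ℝ => s + u * r) r 0 := by
      simpa using ((hasDerivAt_id (0 : ℝ)).mul_const r).const_add s
    have h2 : HasDerivAt (fun u : ℝ => γ (s + u * r)) (r • deriv γ s) 0 := by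
      have h3 : HasDerivAt γ (deriv γ s) (s + 0 * r) := by
        simpa using ((hγ.differentiable (by simp)) s).hasDerivAt
      exact h3.scomp (0 : ℝ) h1
    have h4 := h2.tendsto_slope_zero_right
    simpa using h4
  have hη' : Filter.Tendsto (fun z : ℝ × Euc n => η (s + z.1 * r)) (nhdsWithin 0 (Set.Ioi 0) ×ˢ nhds 0)
      (nhds (η s)) := by
    have : Filter.Tendsto (fun ε : ℝ => η (s + ε * r)) (nhds 0) (nhds (η (s + 0 * r))) :=
      Continuous.tendsto (by fun_prop) 0
    rw [zero_mul, add_zero] at this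
    exact this.comp hfst0
  refine Filter.Tendsto.mul (Filter.Tendsto.mul ?_ ?_) tendsto_const_nhds
  · refine (hψ.tendsto _).comp ?_
    have := hsnd.add (hder.comp hfst)
    simpa using this
  · exact (Complex.continuous_ofReal.tendsto _).comp hη'

/-- The rescaled kernel integral converges. -/
lemma G_tendsto {n : ℕ} {a b : ℝ} {γ : ℝ → Euc n} (hγ : ContDiff ℝ (⊤ : ℕ∞) γ)
    {c : ℝ} (hc : 0 < c)
    (hbl : ∀ s ∈ Set.Icc a b, ∀ t ∈ Set.Icc a b, c * |t - s| ≤ ‖γ t - γ s‖)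
    {η χ : ℝ → ℝ} (hη : Continuous η) (hχ : Continuous χ) (hχc : HasCompactSupport χ)
    (h0 : ∀ s, 0 ≤ η s) (h1 : ∀ s, η s ≤ 1)
    (hs : ∀ s, η s ≠ 0 → s ∈ Set.Icc a b) (hχ0 : ∀ s, 0 ≤ χ s) (hχs : ∀ s, χ s ≠ 0 → s ∈ Set.Icc a b)
    (ψ : SchwartzMap (Euc n) ℂ) :
    Filter.Tendsto (fun z : ℝ × Euc n => ∫ w, ker γ η χ ψ z.1 z.2 w ∂(volume.prod volume))
      (nhdsWithin 0 (Set.Ioi 0) ×ˢ nhds 0)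
      (nhds (∫ w : ℝ × ℝ, ψ (w.2 • deriv γ w.1) * (η w.1 : ℂ) * (χ w.1 : ℂ) ∂(volume.prod volume))) := by
  obtain ⟨C, hC0, hC⟩ := decay2 ψ
  refine tendsto_integral_filter_of_dominated_convergence
    (fun w : ℝ × ℝ => χ w.1 * (2 * C * (1 + (c * w.2) ^ 2)⁻¹)) ?_ ?_ (bound_integrable hχ hχc hc) ?_
  · exact Filter.Eventually.of_forall fun z =>
      (ker_cont hγ.continuous hη hχ ψ.continuous _ _).aestronglyMeasurable
  · have e1 : ∀ᶠ z : ℝ × Euc n in nhdsWithin 0 (Set.Ioi 0) ×ˢ nhds 0, 0 < z.1 :=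
      Filter.tendsto_fst.eventually (self_mem_nhdsWithin)
    have e2 : ∀ᶠ z : ℝ × Euc n in nhdsWithin (0 : ℝ) (Set.Ioi 0) ×ˢ nhds 0, ‖z.2‖ ≤ 1 := by
      have : ∀ᶠ y : Euc n in nhds 0, ‖y‖ ≤ 1 := by
        filter_upwards [Metric.ball_mem_nhds (0 : Euc n) one_pos] with y hy
        simpa using (mem_ball_zero_iff.1 hy).le
      exact Filter.tendsto_snd.eventually this
    filter_upwards [e1, e2] with z hz1 hz2
    exact Filter.Eventually.of_forall fun w =>
      ker_bound hc hbl h0 h1 hs hχ0 hχs hC0 hC hz1 hz2 w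
  · exact Filter.Eventually.of_forall fun w => ker_tendsto hγ hη ψ.continuous w

/-- The averaging operator applied to the example, as the rescaled kernel integral. -/
lemma avg_eq_G {n : ℕ} {a b : ℝ} {γ : ℝ → Euc n} (hγ : Continuous γ)
    {c : ℝ} (hc : 0 < c)
    (hbl : ∀ s ∈ Set.Icc a b, ∀ t ∈ Set.Icc a b, c * |t - s| ≤ ‖γ t - γ s‖)
    {η χ : ℝ → ℝ} (hη : Continuous η) (hχ : Continuous χ) (hχc : HasCompactSupport χ)
    (h0 : ∀ s, 0 ≤ η s) (h1 : ∀ s, η s ≤ 1)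
    (hs : ∀ s, η s ≠ 0 → s ∈ Set.Icc a b) (hχ0 : ∀ s, 0 ≤ χ s) (hχs : ∀ s, χ s ≠ 0 → s ∈ Set.Icc a b)
    (ψ : SchwartzMap (Euc n) ℂ) {lam : ℝ} (hl : 0 < lam) {x : Euc n} (hx : ‖lam • x‖ ≤ 1) :
    avgOp γ χ (avgOp (fun s => - γ s) η (fun y => (lam : ℂ) * ψ (lam • y))) x =
      ∫ w, ker γ η χ ψ lam⁻¹ (lam • x) w ∂(volume.prod volume) := by
  obtain ⟨C, hC0, hC⟩ := decay2 ψ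
  have hint : Integrable (ker γ η χ ψ lam⁻¹ (lam • x)) (volume.prod volume) :=
    (bound_integrable hχ hχc hc).mono' (ker_cont hγ hη hχ ψ.continuous _ _).aestronglyMeasurable
      (Filter.Eventually.of_forall fun w =>
        ker_bound hc hbl h0 h1 hs hχ0 hχs hC0 hC (inv_pos.2 hl) hx w)
  rw [integral_prod _ hint]
  unfold avgOp ker
  congr 1
  ext s
  simp only
  rw [integral_mul_const]
  congr 1
  let k : ℝ → ℂ := fun t => ψ (lam • x + lam • (γ t - γ s)) * (η t : ℂ)
  have e1 : ∫ t, k (s + lam⁻¹ * t) = (lam : ℂ) * ∫ t, k t := by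
    rw [Measure.integral_comp_mul_left (fun t => k (s + t)), integral_add_left_eq_self k s, inv_inv,
      abs_of_pos hl, Complex.real_smul]
  rw [inv_inv]
  refine Eq.trans ?_ e1.symm
  rw [← integral_const_mul]
  congr 1
  ext t
  simp only [k]
  rw [← smul_add, mul_assoc]
  congr 4
  abel

lemma exists_orth {n : ℕ} (hn : 2 ≤ n) (v : Euc n) : ∃ ω : Euc n, ‖ω‖ = 1 ∧ ⟪ω, v⟫ = 0 := by
  have h1 : (Submodule.span ℝ {v})ᗮ ≠ ⊥ := by
    intro h
    rw [Submodule.orthogonal_eq_bot_iff] at h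
    have h2 : Module.finrank ℝ (Submodule.span ℝ {v}) ≤ 1 := finrank_span_le_card ({v} : Set (Euc n))
    rw [h, finrank_top, finrank_euclideanSpace_fin] at h2
    omega
  obtain ⟨u, hu, hu0⟩ := Submodule.exists_mem_ne_zero_of_ne_bot h1
  refine ⟨‖u‖⁻¹ • u, norm_smul_inv_norm hu0, ?_⟩
  rw [inner_smul_left, Submodule.mem_orthogonal_singleton_iff_inner_left.1 hu, mul_zero]

lemma exists_scaled {n : ℕ} (ψ : SchwartzMap (Euc n) ℂ) {ω : Euc n} (hω : ‖ω‖ = 1)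
    (hψ : tsupport (𝓕 ⇑ψ) ⊆ Metric.closedBall ω (1 / 2)) {lam : ℝ} (hl : 0 < lam) :
    ∃ h : SchwartzMap (Euc n) ℂ, (⇑h = fun y => (lam : ℂ) * ψ (lam • y)) ∧
      HasCompactSupport (𝓕 ⇑h) ∧
      Function.support (𝓕 ⇑h) ⊆ {ξ : Euc n | lam / 2 ≤ ‖ξ‖ ∧ ‖ξ‖ ≤ 2 * lam} := by
  have hsupp : Function.support (fun ξ : Euc n =>
      (lam : ℂ) * (((lam ^ n)⁻¹ : ℝ) : ℂ) * 𝓕 ⇑ψ (lam⁻¹ • ξ)) ⊆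
      {ξ : Euc n | lam / 2 ≤ ‖ξ‖ ∧ ‖ξ‖ ≤ 2 * lam} := by
    intro ξ hξ
    have h1 : 𝓕 ⇑ψ (lam⁻¹ • ξ) ≠ 0 := fun h => hξ (by simp [h])
    have h2 := hψ (subset_tsupport _ h1)
    rw [mem_closedBall_iff_norm] at h2
    have h3 := norm_sub_norm_le (lam⁻¹ • ξ) ω
    have h4 := norm_sub_norm_le ω (lam⁻¹ • ξ)
    rw [norm_sub_rev] at h4
    have h5 : ‖ξ‖ = lam * ‖lam⁻¹ • ξ‖ := by
      rw [norm_smul, Real.norm_eq_abs, abs_of_pos (inv_pos.2 hl), mul_inv_cancel_left₀ hl.ne']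
    simp only [Set.mem_ofPred_eq]
    rw [h5]
    constructor <;> nlinarith
  have hcs : HasCompactSupport (fun ξ : Euc n =>
      (lam : ℂ) * (((lam ^ n)⁻¹ : ℝ) : ℂ) * 𝓕 ⇑ψ (lam⁻¹ • ξ)) := by
    refine HasCompactSupport.of_support_subset_isCompact (isCompact_closedBall 0 (2 * lam))
      (hsupp.trans ?_)
    intro ξ hξ
    simpa using hξ.2
  have hsm : ContDiff ℝ (⊤ : ℕ∞) (fun ξ : Euc n =>
      (lam : ℂ) * (((lam ^ n)⁻¹ : ℝ) : ℂ) * 𝓕 ⇑ψ (lam⁻¹ • ξ)) := by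
    refine contDiff_const.mul ?_
    rw [← SchwartzMap.fourier_coe]
    exact ((𝓕 ψ).smooth ⊤).comp (contDiff_const_smul lam⁻¹)
  obtain ⟨h, hF, hI⟩ := exists_ft hcs hsm
  refine ⟨h, ?_, by rw [hF]; exact hcs, by rw [hF]; exact hsupp⟩
  ext y
  rw [hI, Real.fourierInv_eq']
  have hinv : ψ (lam • y) =
      ∫ ξ, Complex.exp (↑(2 * Real.pi * ⟪ξ, lam • y⟫) * Complex.I) • 𝓕 ⇑ψ ξ := by
    have : ψ = 𝓕⁻ (𝓕 ψ) := (FourierTransform.fourierInv_fourier_eq ψ).symm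
    conv_lhs => rw [this, SchwartzMap.fourierInv_coe, SchwartzMap.fourier_coe]
    rw [Real.fourierInv_eq']
  have hcv := Measure.integral_comp_smul (volume : Measure (Euc n))
    (fun ξ => Complex.exp (↑(2 * Real.pi * ⟪ξ, lam • y⟫) * Complex.I) • 𝓕 ⇑ψ ξ) lam⁻¹
  rw [← hinv, finrank_euclideanSpace_fin, inv_pow, inv_inv, abs_of_pos (by positivity),
    Complex.real_smul] at hcv
  have hp : ((lam ^ n : ℝ) : ℂ) ≠ 0 := by exact_mod_cast (by positivity : lam ^ n ≠ 0)
  have hψ2 : (lam : ℂ) * ψ (lam • y) =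
      ((lam : ℂ) * (((lam ^ n)⁻¹ : ℝ) : ℂ)) * (((lam ^ n : ℝ) : ℂ) * ψ (lam • y)) := by
    rw [Complex.ofReal_inv]
    field_simp
  rw [hψ2, ← hcv, ← integral_const_mul]
  congr 1
  ext ξ
  have : ⟪lam⁻¹ • ξ, lam • y⟫ = ⟪ξ, y⟫ := by
    rw [inner_smul_left, inner_smul_right]
    simp [hl.ne']
  rw [this, smul_eq_mul, smul_eq_mul]
  ring

lemma exists_eta {n : ℕ} {a b : ℝ} {γ : ℝ → Euc n} (hγ : ContDiff ℝ (⊤ : ℕ∞) γ)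
    {c : ℝ} (hc : 0 < c) (hcd : ∀ s ∈ Set.Icc a b, c ≤ ‖deriv γ s‖)
    {χ : ℝ → ℝ} (hχ : Continuous χ) (hχc : HasCompactSupport χ) (hχ0 : ∀ s, 0 ≤ χ s)
    (ψ : SchwartzMap (Euc n) ℂ) {ω : Euc n} {q : Euc n → ℝ} (hq0 : q 0 ≠ 0) (hq : Continuous q)
    (hψ : ∀ y, ψ y = Complex.exp (2 * Real.pi * ⟪ω, y⟫ * Complex.I) * (((q y) ^ 2 : ℝ) : ℂ))
    {s0 : ℝ} (hs0 : s0 ∈ Set.Ioo a b) (hχs0 : χ s0 ≠ 0) (hω : ⟪ω, deriv γ s0⟫ = 0) :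
    ∃ η : ℝ → ℝ, Continuous η ∧ HasCompactSupport η ∧ (∀ s, 0 ≤ η s) ∧ (∀ s, η s ≤ 1) ∧
      (∀ s, η s ≠ 0 → s ∈ Set.Icc a b) ∧
      ∫ w : ℝ × ℝ, ψ (w.2 • deriv γ w.1) * (η w.1 : ℂ) * (χ w.1 : ℂ) ∂(volume.prod volume) ≠ 0 := by
  obtain ⟨C, hC0, hC⟩ := decay2 ψ
  have hd : Continuous (deriv γ) := hγ.continuous_deriv (by simp)
  have hψc := ψ.continuous
  have hbd : ∀ s ∈ Set.Icc a b, ∀ r : ℝ, ‖ψ (r • deriv γ s)‖ ≤ 2 * C * (1 + (c * r) ^ 2)⁻¹ := by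
    intro s hs r
    apply decay_bound hC
    rw [norm_smul, abs_mul, abs_of_pos hc, Real.norm_eq_abs]
    have := mul_le_mul_of_nonneg_right (hcd s hs) (abs_nonneg r)
    linarith
  let κ : ℝ → ℝ := fun s => ∫ r : ℝ, (ψ (r • deriv γ s)).re
  have hbint : Integrable (fun r : ℝ => 2 * C * (1 + (c * r) ^ 2)⁻¹) :=
    (integrable_cauchy hc.ne').const_mul _
  have hκc : ContinuousAt κ s0 := by
    refine continuousAt_of_dominated (bound := fun r => 2 * C * (1 + (c * r) ^ 2)⁻¹) ?_ ?_ hbint ?_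
    · exact Filter.Eventually.of_forall fun s => Continuous.aestronglyMeasurable (by fun_prop)
    · filter_upwards [Ioo_mem_nhds hs0.1 hs0.2] with s hs
      refine Filter.Eventually.of_forall fun r => ?_
      exact (Complex.abs_re_le_norm _).trans (hbd s (Set.Ioo_subset_Icc_self hs) r)
    · exact Filter.Eventually.of_forall fun r => Continuous.continuousAt (by fun_prop)
  have hκ0 : 0 < κ s0 := by
    have e : ∀ r : ℝ, (ψ (r • deriv γ s0)).re = q (r • deriv γ s0) ^ 2 := by
      intro r
      rw [hψ, inner_smul_right, hω]
      simp [← Complex.ofReal_pow]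
    refine integral_pos_of_integrable_nonneg_nonzero (x := 0) (by fun_prop) ?_ ?_ ?_
    · refine hbint.mono' (Continuous.aestronglyMeasurable (by fun_prop)) ?_
      refine Filter.Eventually.of_forall fun r => ?_
      exact (Complex.abs_re_le_norm _).trans (hbd s0 (Set.Ioo_subset_Icc_self hs0) r)
    · intro r
      simp only [e]
      exact sq_nonneg _
    · rw [e, zero_smul]
      exact pow_ne_zero 2 hq0
  obtain ⟨δ, hδ, hball⟩ : ∃ δ > 0, ∀ s ∈ Metric.ball s0 δ, s ∈ Set.Ioo a b ∧ κ s0 / 2 < κ s := by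
    have hI : ∀ᶠ s in nhds s0, s ∈ Set.Ioo a b := Ioo_mem_nhds hs0.1 hs0.2
    have := hI.and (hκc.eventually (lt_mem_nhds (half_lt_self hκ0)))
    exact Metric.eventually_nhds_iff_ball.1 this
  let η : ContDiffBump s0 := ⟨δ / 2, δ, by linarith, by linarith⟩
  have hηs : ∀ s, η s ≠ 0 → s ∈ Metric.ball s0 δ := by
    intro s hs
    have : s ∈ Function.support η := hs
    rwa [η.support_eq] at this
  have hηc : Continuous η := η.continuous
  have hη01 : η s0 = 1 := η.one_of_mem_closedBall (Metric.mem_closedBall_self η.rIn_pos.le)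
  refine ⟨η, hηc, η.hasCompactSupport, fun s => η.nonneg, fun s => η.le_one,
    fun s hs => Set.Ioo_subset_Icc_self (hball s (hηs s hs)).1, ?_⟩
  have hint : Integrable (fun w : ℝ × ℝ => ψ (w.2 • deriv γ w.1) * (η w.1 : ℂ) * (χ w.1 : ℂ))
      (volume.prod volume) := by
    refine (bound_integrable (C := C) hχ hχc hc).mono' (Continuous.aestronglyMeasurable (by fun_prop)) ?_
    refine Filter.Eventually.of_forall fun w => ?_
    obtain ⟨s, r⟩ := w
    simp only
    have hχ0s := hχ0 s
    by_cases hη : η s = 0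
    · rw [hη]
      simp
      positivity
    · rw [norm_mul, norm_mul, Complex.norm_real, Complex.norm_real, Real.norm_eq_abs, Real.norm_eq_abs,
        abs_of_nonneg η.nonneg, abs_of_nonneg (hχ0 _)]
      have h3 := hbd s (Set.Ioo_subset_Icc_self (hball s (hηs s hη)).1) r
      calc _ ≤ (2 * C * (1 + (c * r) ^ 2)⁻¹) * 1 * χ s := by
            gcongr
            · exact η.nonneg
            · exact η.le_one
        _ = _ := by ring
  intro hL
  have h1 := Complex.reCLM.integral_comp_comm hint
  rw [hL, map_zero] at h1
  have hintre := Complex.reCLM.integrable_comp hint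
  rw [integral_prod _ hintre] at h1
  have h2 : ∀ s, ∫ r : ℝ, Complex.reCLM (ψ (r • deriv γ s) * (η s : ℂ) * (χ s : ℂ)) =
      κ s * (η s * χ s) := by
    intro s
    rw [← integral_mul_const]
    congr 1
    ext r
    rw [mul_assoc, ← Complex.ofReal_mul, Complex.reCLM_apply, Complex.re_mul_ofReal]
  have h3 := hintre.integral_prod_left
  simp only [h2] at h1 h3
  have h4 : Integrable (fun s => κ s0 / 2 * (η s * χ s)) :=
    Continuous.integrable_of_hasCompactSupport (by fun_prop)
      (hχc.mul_left.mul_left)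
  have h5 : ∫ s, κ s0 / 2 * (η s * χ s) ≤ ∫ s, κ s * (η s * χ s) := by
    refine integral_mono h4 h3 fun s => ?_
    by_cases hη : η s = 0
    · simp [hη]
    · have := (hball s (hηs s hη)).2
      have h6 : 0 ≤ η s * χ s := mul_nonneg η.nonneg (hχ0 s)
      exact mul_le_mul_of_nonneg_right this.le h6
  have h6 : 0 < ∫ s, κ s0 / 2 * (η s * χ s) := by
    refine integral_pos_of_integrable_nonneg_nonzero (x := s0) (by fun_prop) h4 ?_ ?_
    · intro s
      have h6 : 0 ≤ η s * χ s := mul_nonneg η.nonneg (hχ0 s)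
      exact mul_nonneg (by linarith) h6
    · rw [hη01, one_mul]
      exact mul_ne_zero (by linarith) hχs0
  linarith

lemma good_large {n : ℕ} (hn : 2 ≤ n) (p : ℝ≥0∞) (hp : 2 ≤ p) {a b : ℝ} (hab : a < b)
    {γ : ℝ → Euc n} (hγ : ContDiff ℝ (⊤ : ℕ∞) γ)
    (hinj : Set.InjOn γ (Set.Icc a b))
    (hreg : ∀ s ∈ Set.Icc a b, deriv γ s ≠ 0)
    {χ : ℝ → ℝ} (hχ : Continuous χ) (hχc : HasCompactSupport χ)
    (hχs : tsupport χ ⊆ Set.Ioo a b)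
    (hχpos : ∀ s, 0 ≤ χ s) (hχne : χ ≠ 0) :
    ∃ R : ℝ, Good p γ χ (Set.Ici R) := by
  obtain ⟨c, hc, hbl, hcd⟩ := bilip hγ hinj hreg
  obtain ⟨s0, hs0⟩ := Function.ne_iff.1 hχne
  have hs0I : s0 ∈ Set.Ioo a b := hχs (subset_tsupport _ hs0)
  have hχs' : ∀ s, χ s ≠ 0 → s ∈ Set.Icc a b := fun s hs =>
    Set.Ioo_subset_Icc_self (hχs (subset_tsupport _ hs))
  obtain ⟨ω, hω1, hω⟩ := exists_orth hn (deriv γ s0)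
  obtain ⟨ψ, q, hψs, hq0, hqc, hψ⟩ := exists_psi ω
  obtain ⟨η, hη, hηc, h0, h1, hs, hL⟩ := exists_eta hγ hc hcd hχ hχc hχpos ψ hq0 hqc hψ hs0I hs0 hω
  have hT := G_tendsto hγ hc hbl hη hχ hχc h0 h1 hs hχpos hχs' ψ
  set L := ∫ w : ℝ × ℝ, ψ (w.2 • deriv γ w.1) * (η w.1 : ℂ) * (χ w.1 : ℂ) ∂(volume.prod volume) with hLdef
  have hLpos : 0 < ‖L‖ := norm_pos_iff.2 hL
  have hev := hT.norm.eventually (lt_mem_nhds (half_lt_self hLpos))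
  obtain ⟨P, hP, Q, hQ, hPQ⟩ := Filter.eventually_prod_iff.1 hev
  obtain ⟨ε, hε, hεP⟩ := mem_nhdsGT_iff_exists_Ioo_subset.1 hP
  obtain ⟨δ', hδ', hδQ⟩ := Metric.eventually_nhds_iff_ball.1 hQ
  set δ := min δ' 1 with hδdef
  have hδ : 0 < δ := lt_min hδ' one_pos
  have hε0 : 0 < ε := hε
  obtain ⟨M, hM, hMb⟩ := sup_bound hab hγ.continuous hc hbl h0 h1 hs ψ
  -- the L¹ constant
  have hKη : ∫⁻ s, ‖η s‖ₑ ≠ ⊤ := (hη.integrable_of_hasCompactSupport hηc).2.ne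
  have hKψ : ∫⁻ x, ‖ψ x‖ₑ ≠ ⊤ := (ψ.integrable (μ := volume)).2.ne
  set K : ℝ := ((∫⁻ s, ‖η s‖ₑ) * ∫⁻ x, ‖ψ x‖ₑ).toReal + 1 with hK
  have hK0 : 0 < K := by positivity
  set V : ℝ := (volume (Metric.ball (0 : Euc n) δ)).toReal with hV
  have hV0 : 0 < V := ENNReal.toReal_pos (Metric.measure_ball_pos _ _ hδ).ne' measure_ball_lt_top.ne
  set θ : ℝ := 1 / p.toReal with hθ
  have hθ0 : 0 ≤ θ := by positivity
  refine ⟨ε⁻¹ + 1, ‖L‖ / 2 * V ^ θ / (M ^ (1 - θ) * K ^ θ), by positivity, ?_⟩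
  intro lam hlam hlam1
  have hl : 0 < lam := by linarith
  obtain ⟨h, hh, hhc, hhs⟩ := exists_scaled ψ hω1 hψs hl
  obtain ⟨F, hF, hFF⟩ := avg_schwartz (γ := fun s => - γ s) hγ.continuous.neg hη hηc h0 h hhc
  rw [hh] at hF
  have hlow : ∀ x, ‖x‖ < lam⁻¹ * δ → ‖L‖ / 2 ≤ ‖avgOp γ χ ⇑F x‖ := by
    intro x hx
    have hx' : ‖lam • x‖ < δ := by
      rw [norm_smul, Real.norm_eq_abs, abs_of_pos hl]
      rwa [lt_inv_mul_iff₀ hl] at hx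
    rw [hF, avg_eq_G hγ.continuous hc hbl hη hχ hχc h0 h1 hs hχpos hχs' ψ hl
      (hx'.le.trans (min_le_right _ _))]
    refine (hPQ (x := lam⁻¹) (hεP ?_) (y := lam • x) (hδQ _ ?_)).le
    · refine ⟨inv_pos.2 hl, ?_⟩
      rw [inv_lt_comm₀ hl hε0]
      have : ε⁻¹ + 1 ≤ lam := hlam
      linarith
    · rw [mem_ball_zero_iff]
      exact hx'.trans_le (min_le_left _ _)
  have hlo := lower p hp (avgOp γ χ ⇑F) hδ hl (by positivity : 0 < ‖L‖ / 2) hlow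
  refine ⟨F, ?_, ?_, ?_⟩
  · rintro rfl
    have := hlow 0 (by rw [norm_zero]; positivity)
    simp [avgOp] at this
    linarith
  · have hcl : IsClosed {ξ : Euc n | lam / 2 ≤ ‖ξ‖ ∧ ‖ξ‖ ≤ 2 * lam} :=
      (isClosed_le continuous_const continuous_norm).inter (isClosed_le continuous_norm continuous_const)
    refine closure_minimal (fun ξ hξ => hhs ?_) hcl
    intro h0
    apply hξ
    rw [hFF, h0, mul_zero]
  · have hN : ∫⁻ x, ‖F x‖ₑ ≤ ENNReal.ofReal (lam * lam⁻¹ ^ n * K) := by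
      have hc1 : Continuous (fun y => (lam : ℂ) * ψ (lam • y)) := by
        have := ψ.continuous
        fun_prop
      rw [hF]
      refine (l1_bound hγ.continuous.neg hη hc1).trans ?_
      have e1 : ∫⁻ y, ‖(lam : ℂ) * ψ (lam • y)‖ₑ = ENNReal.ofReal (lam * lam⁻¹ ^ n) * ∫⁻ x, ‖ψ x‖ₑ := by
        simp only [enorm_mul]
        rw [lintegral_const_mul' _ _ (by simp)]
        have e2 : ∫⁻ y, ‖ψ (lam • y)‖ₑ = ENNReal.ofReal (lam⁻¹ ^ n) * ∫⁻ x, ‖ψ x‖ₑ := by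
          have e3 : Integrable (fun y => ψ (lam • y)) := ψ.integrable.comp_smul hl.ne'
          rw [← ofReal_integral_norm_eq_lintegral_enorm e3,
            ← ofReal_integral_norm_eq_lintegral_enorm ψ.integrable,
            Measure.integral_comp_smul volume (fun y => ‖ψ y‖), finrank_euclideanSpace_fin,
            abs_of_pos (by positivity), smul_eq_mul, ENNReal.ofReal_mul (by positivity), inv_pow]
        rw [e2, ENNReal.ofReal_mul hl.le, mul_assoc, ← ofReal_norm, Complex.norm_real,
          Real.norm_eq_abs, abs_of_pos hl]
      rw [e1, mul_left_comm, ENNReal.ofReal_mul (p := lam * lam⁻¹ ^ n) (by positivity)]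
      refine mul_le_mul' le_rfl ?_
      rw [hK, ENNReal.ofReal_add (by positivity) zero_le_one,
        ENNReal.ofReal_toReal (ENNReal.mul_ne_top hKη hKψ)]
      exact le_self_add
    have hup := interp p hp F (M := M) (fun x => by rw [hF]; exact hMb lam hl x) hN
    refine le_trans ?_ hlo
    refine (mul_le_mul_right hup _).trans (le_of_eq ?_)
    rw [← hθ, ENNReal.ofReal_rpow_of_pos hM, ENNReal.ofReal_rpow_of_nonneg (by positivity) hθ0,
      ← ENNReal.ofReal_mul (by positivity), ← ENNReal.ofReal_mul (by positivity)]
    congr 1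
    have hpt : (1 / p).toReal = θ := by rw [ENNReal.toReal_div]; simp [hθ]
    rw [hpt, ← hV, Real.mul_rpow (by positivity) hK0.le, Real.mul_rpow hl.le (by positivity),
      Real.mul_rpow (by positivity) hV0.le, Real.rpow_neg hl.le]
    have : lam ^ θ ≠ 0 := by positivity
    have : M ^ (1 - θ) ≠ 0 := by positivity
    have : K ^ θ ≠ 0 := by positivity
    field_simp

/-- lower bound `sup{‖A_γ f‖_p : f ∈ Z_λ} ≳ λ^{−1/p} ‖f‖_p`
witnessing the dimensional constraint `α ≤ 1/p`. -/
theorem statement5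
    (n : ℕ) (hn : 2 ≤ n)
    (p : ℝ≥0∞) (hp : 2 ≤ p)
    (a b : ℝ) (hab : a < b)
    (γ : ℝ → Euc n) (hγ : ContDiff ℝ (⊤ : ℕ∞) γ)
    (hinj : Set.InjOn γ (Set.Icc a b))
    (hreg : ∀ s ∈ Set.Icc a b, deriv γ s ≠ 0)
    (χ : ℝ → ℝ) (hχ : ContDiff ℝ (⊤ : ℕ∞) χ) (hχc : HasCompactSupport χ)
    (hχs : tsupport χ ⊆ Set.Ioo a b)
    (hχpos : ∀ s, 0 ≤ χ s) (hχne : χ ≠ 0) :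
    ∃ c : ℝ, 0 < c ∧ ∀ lam : ℝ, 1 ≤ lam →
      ∃ f : SchwartzMap (Euc n) ℂ, f ≠ 0 ∧
        tsupport (𝓕 ⇑f) ⊆ {ξ : Euc n | lam / 2 ≤ ‖ξ‖ ∧ ‖ξ‖ ≤ 2 * lam} ∧
        ENNReal.ofReal (c * lam ^ (-(1 / p).toReal)) * eLpNorm (⇑f) p volume ≤
          eLpNorm (avgOp γ χ ⇑f) p volume := by
  obtain ⟨R, hR⟩ := good_large hn p hp hab hγ hinj hreg hχ.continuous hχc hχs hχpos hχne
  obtain ⟨c, hc, h⟩ := (good_Icc hn p hp hγ.continuous hχ.continuous hχc hχpos hχne R).union hR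
  refine ⟨c, hc, fun lam hl => h lam ?_ hl⟩
  rcases le_total lam R with h1 | h1
  · exact Or.inl ⟨hl, h1⟩
  · exact Or.inr h1
end
end

section
/- Let I ⊆ ℝ be an interval, a ∈ C_c^∞(ℝ) supported in I, φ ∈ C^∞(I), R ≥ 1, and let (C_j)_{j ≥ 0} be constants ≥ 1 such that on the support of a: φ'(s) ≠ 0; |φ^{(j)}(s)| ≤ C_j R^{−(j−1)} |φ'(s)|^j for every j ≥ 2; and |a^{(j)}(s)| ≤ C_j R^{−j} |φ'(s)|^j for every j ≥ 0. Then for every N ∈ ℕ₀ there is a constant C(N), depending only on N and C₀, …, C_{N+1} (in particular independent of R, φ and a), such that |∫_ℝ e^{i φ(s)} a(s) ds| ≤ C(N) · |supp a| · R^{−N}, where |supp a| denotes the Lebesgue measure of the support of a. -/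
open MeasureTheory Set

noncomputable section

/-- Formal expressions in the derivatives of the amplitude and the phase. -/
inductive PhExpr : Type
  | A : ℕ → PhExpr
  | plus : PhExpr → PhExpr → PhExpr
  | ng : PhExpr → PhExpr
  | mulp : ℕ → PhExpr → PhExpr
  | dv : PhExpr → PhExpr

namespace PhExpr

/-- Value of an expression. -/
def ev (p : ℕ → ℝ → ℝ) (b : ℕ → ℝ → ℂ) : PhExpr → ℝ → ℂ
  | A i => b i
  | plus e f => fun s => ev p b e s + ev p b f s
  | ng e => fun s => - ev p b e s
  | mulp j e => fun s => (p j s : ℂ) * ev p b e s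
  | dv e => fun s => ev p b e s / (p 1 s : ℂ)

/-- Formal derivative. -/
def der : PhExpr → PhExpr
  | A i => A (i + 1)
  | plus e f => plus (der e) (der f)
  | ng e => ng (der e)
  | mulp j e => plus (mulp (j + 1) e) (mulp j (der e))
  | dv e => plus (dv (der e)) (ng (dv (dv (mulp 2 e))))

/-- Homogeneity: order `n` in `1/R`, degree `d` in the first derivative of the phase. -/
def G : PhExpr → ℤ → ℤ → Prop
  | A i, n, d => n = i ∧ d = i
  | plus e f, n, d => G e n d ∧ G f n d
  | ng e, n, d => G e n d
  | mulp j e, n, d => 2 ≤ j ∧ G e (n - (j - 1)) (d - j)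
  | dv e, n, d => G e n (d + 1)

/-- The constant in the bound. -/
def cst (C : ℕ → ℝ) : PhExpr → ℝ
  | A i => C i
  | plus e f => cst C e + cst C f
  | ng e => cst C e
  | mulp j e => C j * cst C e
  | dv e => cst C e

theorem G_der (e : PhExpr) : ∀ n d, G e n d → G (der e) (n + 1) (d + 1) := by
  induction e with
  | A i =>
    rintro n d ⟨rfl, rfl⟩
    simp [der, G]
  | plus e f he hf =>
    rintro n d ⟨h1, h2⟩
    exact ⟨he _ _ h1, hf _ _ h2⟩
  | ng e he =>
    intro n d h
    exact he _ _ h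
  | mulp j e he =>
    rintro n d ⟨hj, h⟩
    refine ⟨⟨by omega, ?_⟩, ⟨hj, ?_⟩⟩
    · convert h using 1 <;> push_cast <;> ring
    · convert he _ _ h using 1 <;> ring
  | dv e he =>
    intro n d h
    refine ⟨?_, ?_⟩
    · exact he _ _ h
    · refine ⟨le_refl _, ?_⟩
      have h' : G e n (d + 1) := h
      convert h' using 1 <;> push_cast <;> ring

theorem cst_pos (C : ℕ → ℝ) (hC : ∀ j, 1 ≤ C j) (e : PhExpr) : 0 < cst C e := by
  induction e with
  | A i => exact lt_of_lt_of_le one_pos (hC i)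
  | plus e f he hf => exact add_pos he hf
  | ng e he => exact he
  | mulp j e he => exact mul_pos (lt_of_lt_of_le one_pos (hC j)) he
  | dv e he => exact he

theorem ev_zero (p : ℕ → ℝ → ℝ) (b : ℕ → ℝ → ℂ) (s : ℝ) (hb : ∀ i, b i s = 0) (e : PhExpr) :
    ev p b e s = 0 := by
  induction e with
  | A i => exact hb i
  | plus e f he hf => simp [ev, he, hf]
  | ng e he => simp [ev, he]
  | mulp j e he => simp [ev, he]
  | dv e he => simp [ev, he]

theorem ev_bound (C : ℕ → ℝ) (hC : ∀ j, 1 ≤ C j) (p : ℕ → ℝ → ℝ) (b : ℕ → ℝ → ℂ) (s R : ℝ)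
    (hR : 0 < R) (h1 : p 1 s ≠ 0)
    (hp : ∀ j : ℕ, 2 ≤ j → |p j s| ≤ C j * R ^ (-((j : ℤ) - 1)) * |p 1 s| ^ (j : ℤ))
    (hb : ∀ j : ℕ, ‖b j s‖ ≤ C j * R ^ (-(j : ℤ)) * |p 1 s| ^ (j : ℤ)) (e : PhExpr) :
    ∀ n d : ℤ, G e n d → ‖ev p b e s‖ ≤ cst C e * R ^ (-n) * |p 1 s| ^ d := by
  have hq : 0 < |p 1 s| := abs_pos.mpr h1
  induction e with
  | A i =>
    rintro n d ⟨rfl, rfl⟩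
    exact hb i
  | plus e f he hf =>
    rintro n d ⟨g1, g2⟩
    refine (norm_add_le _ _).trans ((add_le_add (he _ _ g1) (hf _ _ g2)).trans (le_of_eq ?_))
    simp only [cst]
    ring
  | ng e he =>
    intro n d h
    simpa [ev, cst] using he _ _ h
  | mulp j e he =>
    rintro n d ⟨hj, h⟩
    have k1 := he _ _ h
    have k2 := hp j hj
    have hCj : 0 < C j := lt_of_lt_of_le one_pos (hC j)
    simp only [ev, cst, norm_mul, Complex.norm_real, Real.norm_eq_abs]
    refine (mul_le_mul k2 k1 (norm_nonneg _) (by positivity)).trans (le_of_eq ?_)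
    have e1 : R ^ (-n) = R ^ (-((j : ℤ) - 1)) * R ^ (-(n - (j - 1))) := by
      rw [← zpow_add₀ hR.ne']; congr 1; ring
    have e2 : |p 1 s| ^ d = |p 1 s| ^ (j : ℤ) * |p 1 s| ^ (d - j) := by
      rw [← zpow_add₀ hq.ne']; congr 1; ring
    rw [e1, e2]
    ring
  | dv e he =>
    intro n d h
    have k1 := he _ _ h
    simp only [ev, cst, norm_div, Complex.norm_real, Real.norm_eq_abs]
    rw [div_le_iff₀ hq]
    refine k1.trans (le_of_eq ?_)
    rw [zpow_add_one₀ hq.ne']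
    ring

theorem ev_deriv (p : ℕ → ℝ → ℝ) (b : ℕ → ℝ → ℂ) (I : Set ℝ) (s : ℝ) (h1 : p 1 s ≠ 0)
    (hp : ∀ j, HasDerivWithinAt (p j) (p (j + 1) s) I s)
    (hb : ∀ j, HasDerivWithinAt (b j) (b (j + 1) s) I s) (e : PhExpr) :
    HasDerivWithinAt (ev p b e) (ev p b (der e) s) I s := by
  induction e with
  | A i => exact hb i
  | plus e f he hf => exact he.add hf
  | ng e he => exact he.neg
  | mulp j e he => exact (hp j).ofReal_comp.mul he
  | dv e he =>
    have hc : (p 1 s : ℂ) ≠ 0 := by exact_mod_cast h1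
    have := he.div (hp 1).ofReal_comp hc
    refine this.congr_deriv ?_
    simp only [der, ev]
    field_simp
    ring

theorem ev_deriv' (p : ℕ → ℝ → ℝ) (b : ℕ → ℝ → ℂ) (I T : Set ℝ) (hT : IsClosed T)
    (h1 : ∀ s ∈ T, p 1 s ≠ 0)
    (hp : ∀ j, ∀ s ∈ I, HasDerivWithinAt (p j) (p (j + 1) s) I s)
    (hb : ∀ j, ∀ s ∈ I, HasDerivWithinAt (b j) (b (j + 1) s) I s)
    (hz : ∀ j, ∀ s ∉ T, b j s = 0) (e : PhExpr) (s : ℝ) (hs : s ∈ I) :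
    HasDerivWithinAt (ev p b e) (ev p b (der e) s) I s := by
  by_cases hsT : s ∈ T
  · exact ev_deriv p b I s (h1 s hsT) (fun j => hp j s hs) (fun j => hb j s hs) e
  · rw [ev_zero p b s (fun i => hz i s hsT)]
    have : ev p b e =ᶠ[nhds s] fun _ => 0 := by
      filter_upwards [hT.isOpen_compl.mem_nhds hsT] with x hx
      exact ev_zero p b x (fun i => hz i x hx) e
    exact ((hasDerivAt_const s (0 : ℂ)).congr_of_eventuallyEq this).hasDerivWithinAt

theorem step (p : ℕ → ℝ → ℝ) (b : ℕ → ℝ → ℂ) (I T : Set ℝ) (hT : IsClosed T)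
    (h1 : ∀ s ∈ T, p 1 s ≠ 0)
    (hp : ∀ j, ∀ s ∈ I, HasDerivWithinAt (p j) (p (j + 1) s) I s)
    (hb : ∀ j, ∀ s ∈ I, HasDerivWithinAt (b j) (b (j + 1) s) I s)
    (hz : ∀ j, ∀ s ∉ T, b j s = 0) (α β : ℝ) (hαβ : α ≤ β) (hI : Icc α β ⊆ I)
    (hTI : T ⊆ Icc α β) (hα : ∀ j, b j α = 0) (hβ : ∀ j, b j β = 0) (e : PhExpr) :
    ‖∫ s : ℝ, Complex.exp (Complex.I * (p 0 s : ℂ)) * ev p b e s‖ =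
    ‖∫ s : ℝ, Complex.exp (Complex.I * (p 0 s : ℂ)) * ev p b (der (dv e)) s‖ := by
  have hD := ev_deriv' p b I T hT h1 hp hb hz
  have hE : ∀ s ∈ I, HasDerivWithinAt (fun s => Complex.exp (Complex.I * (p 0 s : ℂ)))
      (Complex.exp (Complex.I * (p 0 s : ℂ)) * (Complex.I * (p 1 s : ℂ))) I s := by
    intro s hs
    exact ((hp 0 s hs).ofReal_comp.const_mul Complex.I).cexp
  have conv : ∀ f : PhExpr, (∫ s : ℝ, Complex.exp (Complex.I * (p 0 s : ℂ)) * ev p b f s) =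
      ∫ s in α..β, Complex.exp (Complex.I * (p 0 s : ℂ)) * ev p b f s := by
    intro f
    rw [intervalIntegral.integral_of_le hαβ, setIntegral_eq_integral_of_forall_compl_eq_zero]
    intro x hx
    have : ev p b f x = 0 := by
      apply ev_zero
      intro i
      by_cases hxT : x ∈ T
      · have h2 := hTI hxT
        have : x = α := by
          by_contra hne
          exact hx ⟨lt_of_le_of_ne h2.1 (Ne.symm hne), h2.2⟩
        rw [this]; exact hα i
      · exact hz i x hxT
    rw [this, mul_zero]
  have hcont : ∀ f : PhExpr, IntervalIntegrable
      (fun s => Complex.exp (Complex.I * (p 0 s : ℂ)) * ev p b f s) volume α β := by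
    intro f
    apply ContinuousOn.intervalIntegrable_of_Icc hαβ
    intro s hs
    exact (((hE s (hI hs)).mul (hD f s (hI hs))).continuousWithinAt).mono hI
  have key := intervalIntegral.integral_eq_sub_of_hasDerivAt_of_le hαβ
    (f := fun s => Complex.exp (Complex.I * (p 0 s : ℂ)) * ev p b (dv e) s)
    (f' := fun s => Complex.I * (Complex.exp (Complex.I * (p 0 s : ℂ)) * ev p b e s) +
      Complex.exp (Complex.I * (p 0 s : ℂ)) * ev p b (der (dv e)) s)
    (by
      intro s hs
      exact (((hE s (hI hs)).mul (hD (dv e) s (hI hs))).continuousWithinAt).mono hI)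
    (by
      intro s hs
      have hsI : s ∈ I := hI (Ioo_subset_Icc_self hs)
      have hn : I ∈ nhds s := Filter.mem_of_superset (Icc_mem_nhds hs.1 hs.2) hI
      refine (((hE s hsI).mul (hD (dv e) s hsI)).hasDerivAt hn).congr_deriv ?_
      congr 1
      by_cases hsT : s ∈ T
      · have hc : (p 1 s : ℂ) ≠ 0 := by exact_mod_cast h1 s hsT
        simp only [ev]
        field_simp
      · rw [ev_zero p b s (fun i => hz i s hsT), ev_zero p b s (fun i => hz i s hsT)]
        simp)
    (((hcont e).const_mul _).add (hcont _))
  rw [intervalIntegral.integral_add ((hcont e).const_mul _) (hcont _),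
    intervalIntegral.integral_const_mul] at key
  simp only [ev_zero p b α hα, ev_zero p b β hβ, mul_zero, sub_zero] at key
  rw [conv, conv, ← norm_neg (∫ s in α..β, _ * ev p b (der (dv e)) s), ← eq_neg_of_add_eq_zero_left key]
  simp

/-- The iterated expression. -/
def it : ℕ → PhExpr
  | 0 => A 0
  | N + 1 => der (dv (it N))

theorem G_it (N : ℕ) : G (it N) N 0 := by
  induction N with
  | zero => simp [it, G]
  | succ N ih =>
    have : G (dv (it N)) N (-1) := by
      change G (it N) N (-1 + 1)
      simpa using ih
    simpa [it] using G_der _ _ _ this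

end PhExpr

/-- the non-stationary phase lemma.  Under the derivative bounds on the
support of `a`, `|∫ e^{iφ(s)} a(s) ds| ≤ C(N) |supp a| R^{−N}` with `C(N)` independent of
`R`, `φ`, `a` and the interval `I`. -/
theorem statement18 (C : ℕ → ℝ) (hC : ∀ j, 1 ≤ C j) (N : ℕ) :
    ∃ K : ℝ, 0 < K ∧
    ∀ I : Set ℝ, I.OrdConnected →
    ∀ φ : ℝ → ℝ, ContDiffOn ℝ (⊤ : ℕ∞) φ I →
    ∀ a : ℝ → ℂ, ContDiff ℝ (⊤ : ℕ∞) a → HasCompactSupport a → tsupport a ⊆ I →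
    ∀ R : ℝ, 1 ≤ R →
      (∀ s ∈ tsupport a, iteratedDerivWithin 1 φ I s ≠ 0) →
      (∀ j : ℕ, 2 ≤ j → ∀ s ∈ tsupport a,
        |iteratedDerivWithin j φ I s| ≤
          C j * R ^ (-((j : ℝ) - 1)) * |iteratedDerivWithin 1 φ I s| ^ j) →
      (∀ j : ℕ, ∀ s ∈ tsupport a,
        ‖iteratedDeriv j a s‖ ≤ C j * R ^ (-(j : ℝ)) * |iteratedDerivWithin 1 φ I s| ^ j) →
      ‖∫ s : ℝ, Complex.exp (Complex.I * (φ s : ℂ)) * a s‖ ≤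
        K * (volume (tsupport a)).toReal * R ^ (-(N : ℝ)) := by
  refine ⟨PhExpr.cst C (PhExpr.it N), PhExpr.cst_pos C hC _, ?_⟩
  intro I hI φ hφ a ha hac haI R hR h1 hp hb
  have hR0 : 0 < R := lt_of_lt_of_le one_pos hR
  have hK := PhExpr.cst_pos C hC (PhExpr.it N)
  rcases (tsupport a).eq_empty_or_nonempty with hemp | hne
  · have : a = 0 := tsupport_eq_empty_iff.mp hemp
    subst this
    simp only [Pi.zero_apply, mul_zero, integral_zero, norm_zero]
    positivity
  have hT : IsClosed (tsupport a) := isClosed_tsupport a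
  have hTc : IsCompact (tsupport a) := hac
  have hint : (interior I).Nonempty := by
    have : (Function.support a).Nonempty := by
      by_contra h
      rw [not_nonempty_iff_eq_empty] at h
      simp [tsupport, h] at hne
    refine this.mono (interior_maximal ((subset_tsupport a).trans haI) ?_)
    exact ha.continuous.isOpen_support
  have hU : UniqueDiffOn ℝ I := uniqueDiffOn_convex hI.convex hint
  have hbd : ∀ j, ∀ s, HasDerivAt (iteratedDeriv j a) (iteratedDeriv (j + 1) a s) s := by
    intro j s
    rw [iteratedDeriv_succ]
    exact ((ha.differentiable_iteratedDeriv j (by exact_mod_cast WithTop.coe_lt_top _)) s).hasDerivAt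
  have hpd : ∀ j, ∀ s ∈ I, HasDerivWithinAt (iteratedDerivWithin j φ I)
      (iteratedDerivWithin (j + 1) φ I s) I s := by
    intro j s hs
    rw [iteratedDerivWithin_succ]
    exact ((hφ.differentiableOn_iteratedDerivWithin
      (by exact_mod_cast WithTop.coe_lt_top _) hU) s hs).hasDerivWithinAt
  have hz : ∀ j, ∀ s ∉ tsupport a, iteratedDeriv j a s = 0 := by
    intro j
    induction j with
    | zero => 
      intro s hs
      simpa using image_eq_zero_of_notMem_tsupport hs
    | succ j ih =>
      intro s hs
      have : iteratedDeriv j a =ᶠ[nhds s] fun _ => 0 := by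
        filter_upwards [hT.isOpen_compl.mem_nhds hs] with x hx
        exact ih x hx
      exact (hbd j s).unique ((hasDerivAt_const s (0 : ℂ)).congr_of_eventuallyEq this)
  have hαT := hTc.sInf_mem hne
  have hβT := hTc.sSup_mem hne
  set α := sInf (tsupport a) with hα
  set β := sSup (tsupport a) with hβ
  have hTI : tsupport a ⊆ Icc α β := fun x hx =>
    ⟨csInf_le hTc.bddBelow hx, le_csSup hTc.bddAbove hx⟩
  have hcz : ∀ j, ∀ (U : Set ℝ) (s : ℝ), s ∈ closure U → (∀ x ∈ U, x ∉ tsupport a) →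
      iteratedDeriv j a s = 0 := by
    intro j U s hs hU
    have hc : Continuous (iteratedDeriv j a) :=
      continuous_iff_continuousAt.mpr fun x => (hbd j x).continuousAt
    have hcl : IsClosed {x | iteratedDeriv j a x = 0} := isClosed_eq hc continuous_const
    exact closure_minimal (fun x hx => hz j x (hU x hx)) hcl hs
  have hα0 : ∀ j, iteratedDeriv j a α = 0 := fun j => hcz j (Iio α) α
    (by rw [closure_Iio]; exact self_mem_Iic) (fun x hx hxT => absurd (hTI hxT).1 (not_le.mpr hx))
  have hβ0 : ∀ j, iteratedDeriv j a β = 0 := fun j => hcz j (Ioi β) β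
    (by rw [closure_Ioi]; exact self_mem_Ici) (fun x hx hxT => absurd (hTI hxT).2 (not_le.mpr hx))
  let p : ℕ → ℝ → ℝ := fun j => iteratedDerivWithin j φ I
  let b : ℕ → ℝ → ℂ := fun j => iteratedDeriv j a
  have hiter : ∀ M : ℕ, ‖∫ s : ℝ, Complex.exp (Complex.I * (φ s : ℂ)) * a s‖ =
      ‖∫ s : ℝ, Complex.exp (Complex.I * (p 0 s : ℂ)) * PhExpr.ev p b (PhExpr.it M) s‖ := by
    intro M
    induction M with
    | zero => simp [p, b, PhExpr.it, PhExpr.ev]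
    | succ M ih =>
      rw [ih]
      exact PhExpr.step p b I (tsupport a) hT h1 hpd (fun j s _ => (hbd j s).hasDerivWithinAt) hz
        α β (hTI hαT).2 (hI.out (haI hαT) (haI hβT)) hTI hα0 hβ0 _
  rw [hiter N]
  have hset : (∫ s in tsupport a, Complex.exp (Complex.I * (p 0 s : ℂ)) *
      PhExpr.ev p b (PhExpr.it N) s) =
      ∫ s : ℝ, Complex.exp (Complex.I * (p 0 s : ℂ)) * PhExpr.ev p b (PhExpr.it N) s := by
    apply setIntegral_eq_integral_of_forall_compl_eq_zero
    intro x hx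
    rw [PhExpr.ev_zero p b x (fun i => hz i x hx), mul_zero]
  rw [← hset]
  have hfin := norm_setIntegral_le_of_norm_le_const (μ := volume) (s := tsupport a)
    (f := fun s => Complex.exp (Complex.I * (p 0 s : ℂ)) * PhExpr.ev p b (PhExpr.it N) s)
    (C := PhExpr.cst C (PhExpr.it N) * R ^ (-(N : ℤ))) hTc.measure_lt_top (by
      intro s hs
      have h := PhExpr.ev_bound C hC p b s R hR0 (h1 s hs)
        (by
          intro j hj
          have := hp j hj s hs
          rw [zpow_natCast, ← Real.rpow_intCast]
          push_cast
          exact this)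
        (by
          intro j
          have := hb j s hs
          rw [zpow_natCast, ← Real.rpow_intCast]
          push_cast
          exact this) (PhExpr.it N) N 0 (PhExpr.G_it N)
      rw [zpow_zero, mul_one] at h
      rw [norm_mul, mul_comm Complex.I, Complex.norm_exp_ofReal_mul_I, one_mul]
      exact h)
  refine hfin.trans (le_of_eq ?_)
  rw [← Real.rpow_intCast, measureReal_def]
  push_cast
  ring
end
end

section
/- Let n ≥ 1, let γ : I₀ → ℝⁿ be a smooth curve on a compact interval I₀, let χ ∈ C_c^∞(ℝ) be supported in I₀, let a ∈ C_c^∞(ℝⁿ × ℝ) have s-support contained in I₀, let σ > 0, λ₁, …, λ_n > 0, and let {v₁, …, v_n} be an orthonormal basis of ℝⁿ. Assume: (i) the set {s ∈ ℝ : (ξ; s) ∈ supp a for some ξ ∈ ℝⁿ} has Lebesgue measure at most σ; (ii) every ξ in the ξ-projection of supp a satisfies |⟨ξ, v_j⟩| ≤ λ_j for 1 ≤ j ≤ n; (iii) for every N ∈ ℕ₀ and every 1 ≤ j ≤ n there is a constant C_N with |∇_{v_j}^N a(ξ; s)| ≤ C_N λ_j^{−N} for all (ξ; s), where ∇_{v_j}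 is the directional derivative in ξ along v_j. Then ‖m[a]‖_{M^∞(ℝⁿ)} ≤ C σ, i.e. ‖𝓕^{−1}(m[a] · 𝓕f)‖_{L^∞(ℝⁿ)} ≤ C σ ‖f‖_{L^∞(ℝⁿ)} for every Schwartz function f, where C depends only on n, sup|χ| and finitely many of the constants C_N. -/
open MeasureTheory Set
open scoped FourierTransform InnerProductSpace ENNReal

noncomputable section

/-- The multiplier `m[a](ξ) = ∫ e^{−i⟨γ(s), ξ⟩} a(ξ; s) χ(s) ds`. -/
def symbMult {n : ℕ} (γ : ℝ → Euc n) (χ : ℝ → ℝ) (a : Euc n → ℝ → ℂ) (ξ : Euc n) : ℂ :=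
  ∫ s : ℝ, Complex.exp (-(⟪γ s, ξ⟫_ℝ : ℂ) * Complex.I) * a ξ s * (χ s : ℂ)

lemma aux_mp {n : ℕ} (b : OrthonormalBasis (Fin n) ℝ (Euc n)) :
    MeasurePreserving (fun x : Euc n => fun j => ⟪x, b j⟫_ℝ) volume volume := by
  have h := (PiLp.volume_preserving_ofLp (Fin n)).comp b.measurePreserving_repr
  have e : (fun x : Euc n => fun j => ⟪x, b j⟫_ℝ) = (WithLp.ofLp ∘ ⇑b.repr) := by
    funext x j
    simp [b.repr_apply_apply, real_inner_comm]
  rw [e]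
  exact h

lemma aux_box {n : ℕ} (b : OrthonormalBasis (Fin n) ℝ (Euc n)) (lam : Fin n → ℝ)
    (hl : ∀ j, 0 < lam j) :
    volume {x : Euc n | ∀ j, |⟪x, b j⟫_ℝ| ≤ lam j} = ENNReal.ofReal (∏ j, (2 * lam j)) := by
  have h1 : {x : Euc n | ∀ j, |⟪x, b j⟫_ℝ| ≤ lam j} =
      (fun x : Euc n => fun j => ⟪x, b j⟫_ℝ) ⁻¹' (Set.pi Set.univ fun j => Set.Icc (-lam j) (lam j)) := by
    ext x; simp only [Set.mem_ofPred_eq, Set.mem_preimage, Set.mem_univ_pi, Set.mem_Icc, abs_le]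
  rw [h1, (aux_mp b).measure_preimage
    (MeasurableSet.univ_pi fun j => measurableSet_Icc).nullMeasurableSet, volume_pi_pi]
  rw [ENNReal.ofReal_prod_of_nonneg (fun j _ => by have := hl j; positivity)]
  refine Finset.prod_congr rfl fun j _ => ?_
  rw [Real.volume_Icc]; congr 1; ring

lemma aux_int {n : ℕ} (b : OrthonormalBasis (Fin n) ℝ (Euc n)) (lam : Fin n → ℝ)
    (hl : ∀ j, 0 < lam j) :
    ∫⁻ x : Euc n, ENNReal.ofReal (∏ j, (1 + (lam j * ⟪x, b j⟫_ℝ) ^ 2)⁻¹) =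
      ENNReal.ofReal (∏ j, (Real.pi / lam j)) := by
  have hm : Measurable fun y : Fin n → ℝ => ENNReal.ofReal (∏ j, (1 + (lam j * y j) ^ 2)⁻¹) := by
    fun_prop
  have := (aux_mp b).lintegral_comp hm
  rw [this]
  rw [← ofReal_integral_eq_lintegral_ofReal]
  · rw [integral_fintype_prod_volume_eq_prod (fun j (t : ℝ) => (1 + (lam j * t) ^ 2)⁻¹)]
    congr 1
    refine Finset.prod_congr rfl fun j _ => ?_
    rw [Measure.integral_comp_mul_left (fun t : ℝ => (1 + t ^ 2)⁻¹), integral_univ_inv_one_add_sq,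
      abs_of_pos (inv_pos.2 (hl j)), smul_eq_mul]
    ring
  · refine Integrable.fintype_prod (f := fun j (t : ℝ) => (1 + (lam j * t) ^ 2)⁻¹) fun j => ?_
    exact integrable_inv_one_add_sq.comp_mul_left' (hl j).ne'
  · exact Filter.Eventually.of_forall fun y => Finset.prod_nonneg fun j _ => by positivity

lemma aux_deriv {n : ℕ} (g : SchwartzMap (Euc n) ℂ) (w : Euc n) (N : ℕ) :
    ∃ h : SchwartzMap (Euc n) ℂ,
      (⇑h = (fun G : Euc n → ℂ => fun ζ => fderiv ℝ G ζ w)^[N] (⇑g)) ∧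
      tsupport (⇑h) ⊆ tsupport (⇑g) ∧
      ∀ x, ‖𝓕 (⇑h) x‖ = (2 * Real.pi * |⟪x, w⟫_ℝ|) ^ N * ‖𝓕 (⇑g) x‖ := by
  induction N with
  | zero => exact ⟨g, rfl, subset_rfl, by simp⟩
  | succ N ih =>
    obtain ⟨h, h1, h2, h3⟩ := ih
    have e : ∀ x, (LineDeriv.lineDerivOp w h : SchwartzMap (Euc n) ℂ) x = fderiv ℝ h x w :=
      fun x => SchwartzMap.lineDerivOp_apply_eq_fderiv w h x
    refine ⟨LineDeriv.lineDerivOp w h, ?_, ?_, ?_⟩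
    · rw [Function.iterate_succ_apply', ← h1]
      ext x; exact e x
    · refine subset_trans ?_ h2
      refine subset_trans (closure_mono ?_) (tsupport_fderiv_subset ℝ (f := ⇑h))
      intro x hx
      simp only [Function.mem_support, e] at hx ⊢
      intro h0; apply hx; rw [h0]; rfl
    · intro x
      rw [← SchwartzMap.fourier_coe, SchwartzMap.fourier_lineDerivOp_eq]
      have : (fun y : Euc n => ⟪y, w⟫_ℝ).HasTemperateGrowth := by fun_prop
      simp only [smul_apply, SchwartzMap.smulLeftCLM_apply_apply this, norm_smul]
      rw [SchwartzMap.fourier_coe, h3]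
      simp [abs_of_pos Real.pi_pos]
      ring

lemma aux_sup {n : ℕ} (b : OrthonormalBasis (Fin n) ℝ (Euc n)) (lam : Fin n → ℝ)
    (hl : ∀ j, 0 < lam j) (h : SchwartzMap (Euc n) ℂ) (A : ℝ) (hA : ∀ ξ, ‖h ξ‖ ≤ A)
    (hs : tsupport (⇑h) ⊆ {x : Euc n | ∀ j, |⟪x, b j⟫_ℝ| ≤ lam j}) (x : Euc n) :
    ‖𝓕 (⇑h) x‖ ≤ A * ∏ j, (2 * lam j) := by
  set S := {x : Euc n | ∀ j, |⟪x, b j⟫_ℝ| ≤ lam j} with hS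
  have hP : (0 : ℝ) ≤ ∏ j, (2 * lam j) := Finset.prod_nonneg fun j _ => by have := hl j; positivity
  have hv := aux_box b lam hl
  rw [Real.fourier_eq']
  rw [← setIntegral_eq_integral_of_forall_compl_eq_zero (s := S)]
  · refine (norm_setIntegral_le_of_norm_le_const (C := A) ?_ ?_).trans ?_
    · rw [hv]; exact ENNReal.ofReal_lt_top
    · intro y _
      rw [norm_smul]
      have : ‖Complex.exp (↑(-2 * Real.pi * ⟪y, x⟫_ℝ) * Complex.I)‖ = 1 :=
        Complex.norm_exp_ofReal_mul_I _
      rw [this, one_mul]; exact hA y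
    · rw [measureReal_def, hv, ENNReal.toReal_ofReal hP]
  · intro y hy
    have : h y = 0 := by
      by_contra h0
      exact hy (hs (subset_tsupport _ h0))
    rw [this, smul_zero]

lemma aux_alg {n : ℕ} (hn : 1 ≤ n) (t : Fin n → ℝ) (K A0 A1 : ℝ) (hK : 0 ≤ K)
    (h0 : K ≤ A0) (h1 : ∀ j, (|t j|) ^ (2 * n) * K ≤ A1) :
    K ≤ 2 ^ n * (A0 + A1) * ∏ j, (1 + (t j) ^ 2)⁻¹ := by
  have : Nonempty (Fin n) := ⟨⟨0, hn⟩⟩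
  obtain ⟨j, hj⟩ := Finite.exists_max (fun j => (t j) ^ 2)
  have hprod : ∏ i, (1 + (t i) ^ 2) ≤ (1 + (t j) ^ 2) ^ n := by
    calc ∏ i, (1 + (t i) ^ 2) ≤ ∏ i : Fin n, (1 + (t j) ^ 2) :=
          Finset.prod_le_prod (fun i _ => by positivity) (fun i _ => by have := hj i; linarith)
      _ = _ := by simp
  have h2 : (1 + (t j) ^ 2) ^ n ≤ 2 ^ n * (1 + |t j| ^ (2 * n)) := by
    rw [pow_mul, sq_abs]
    rcases le_total ((t j) ^ 2) 1 with h | h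
    · calc (1 + (t j) ^ 2) ^ n ≤ 2 ^ n := by gcongr; linarith
        _ ≤ _ := by
          have : 0 ≤ ((t j) ^ 2) ^ n := by positivity
          nlinarith [pow_pos (two_pos : (0:ℝ) < 2) n]
    · calc (1 + (t j) ^ 2) ^ n ≤ (2 * (t j) ^ 2) ^ n := by gcongr; linarith
        _ = 2 ^ n * ((t j) ^ 2) ^ n := by rw [mul_pow]
        _ ≤ _ := by gcongr; linarith
  have hpos : 0 < ∏ i, (1 + (t i) ^ 2) := Finset.prod_pos fun i _ => by positivity
  rw [Finset.prod_inv_distrib, ← div_eq_mul_inv, le_div_iff₀ hpos]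
  calc K * ∏ i, (1 + (t i) ^ 2) ≤ K * (2 ^ n * (1 + |t j| ^ (2 * n))) := by
        gcongr; exact hprod.trans h2
    _ = 2 ^ n * (K + |t j| ^ (2 * n) * K) := by ring
    _ ≤ _ := by gcongr; exact h1 j

lemma aux_L1 {n : ℕ} (hn : 1 ≤ n) (b : OrthonormalBasis (Fin n) ℝ (Euc n)) (lam : Fin n → ℝ)
    (hl : ∀ j, 0 < lam j) (g : SchwartzMap (Euc n) ℂ) (cst : ℕ → ℝ)
    (hs : ∀ ξ, g ξ ≠ 0 → ∀ j, |⟪ξ, b j⟫_ℝ| ≤ lam j)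
    (hd : ∀ N : ℕ, ∀ j : Fin n, ∀ ξ : Euc n,
      ‖(fun G : Euc n → ℂ => fun ζ => fderiv ℝ G ζ (b j))^[N] (⇑g) ξ‖ ≤ cst N * (lam j ^ N)⁻¹) :
    ∫⁻ x, ‖𝓕 (⇑g) x‖ₑ ≤
      ENNReal.ofReal (2 ^ n * (|cst 0| + |cst (2 * n)|) * (2 * Real.pi) ^ n) := by
  have hP : (0 : ℝ) ≤ ∏ j, (2 * lam j) := Finset.prod_nonneg fun j _ => by have := hl j; positivity
  have hS : tsupport (⇑g) ⊆ {x : Euc n | ∀ j, |⟪x, b j⟫_ℝ| ≤ lam j} := by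
    refine closure_minimal (fun ξ h => hs ξ h) ?_
    simp only [Set.ofPred_forall]
    refine isClosed_iInter fun j => isClosed_le (by fun_prop) (by fun_prop)
  have key : ∀ N j x, (2 * Real.pi * |⟪x, b j⟫_ℝ|) ^ N * ‖𝓕 (⇑g) x‖ ≤
      cst N * (lam j ^ N)⁻¹ * ∏ j, (2 * lam j) := by
    intro N j x
    obtain ⟨h, h1, h2, h3⟩ := aux_deriv g (b j) N
    rw [← h3]
    refine aux_sup b lam hl h _ (fun ξ => ?_) (h2.trans hS) x
    rw [h1]; exact hd N j ξ
  have pw : ∀ x, ‖𝓕 (⇑g) x‖ ≤ 2 ^ n * (|cst 0| * ∏ j, (2 * lam j) + |cst (2 * n)| * ∏ j, (2 * lam j))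
      * ∏ j, (1 + (lam j * ⟪x, b j⟫_ℝ) ^ 2)⁻¹ := by
    intro x
    refine aux_alg hn (fun j => lam j * ⟪x, b j⟫_ℝ) _ _ _ (norm_nonneg _) ?_ ?_
    · have := key 0 ⟨0, hn⟩ x
      simp only [pow_zero, one_mul, inv_one, mul_one] at this
      exact this.trans (by gcongr; exact le_abs_self _)
    · intro j
      have h := key (2 * n) j x
      have hlp : 0 < lam j ^ (2 * n) := pow_pos (hl j) _
      calc |lam j * ⟪x, b j⟫_ℝ| ^ (2 * n) * ‖𝓕 (⇑g) x‖
          = lam j ^ (2 * n) * (|⟪x, b j⟫_ℝ| ^ (2 * n) * ‖𝓕 (⇑g) x‖) := by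
            rw [abs_mul, abs_of_pos (hl j), mul_pow]; ring
        _ ≤ lam j ^ (2 * n) * ((2 * Real.pi * |⟪x, b j⟫_ℝ|) ^ (2 * n) * ‖𝓕 (⇑g) x‖) := by
            gcongr
            have := Real.pi_gt_three
            nlinarith [abs_nonneg ⟪x, b j⟫_ℝ]
        _ ≤ lam j ^ (2 * n) * (cst (2 * n) * (lam j ^ (2 * n))⁻¹ * ∏ j, (2 * lam j)) := by gcongr
        _ = cst (2 * n) * ∏ j, (2 * lam j) := by field_simp
        _ ≤ _ := by gcongr; exact le_abs_self _
  set D := 2 ^ n * (|cst 0| * ∏ j, (2 * lam j) + |cst (2 * n)| * ∏ j, (2 * lam j)) with hD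
  have hD0 : 0 ≤ D := by positivity
  calc ∫⁻ x, ‖𝓕 (⇑g) x‖ₑ
      ≤ ∫⁻ x, ENNReal.ofReal D * ENNReal.ofReal (∏ j, (1 + (lam j * ⟪x, b j⟫_ℝ) ^ 2)⁻¹) := by
        refine lintegral_mono fun x => ?_
        rw [← ofReal_norm, ← ENNReal.ofReal_mul hD0]
        exact ENNReal.ofReal_le_ofReal (pw x)
    _ = ENNReal.ofReal (D * ∏ j, (Real.pi / lam j)) := by
        rw [lintegral_const_mul' _ _ ENNReal.ofReal_ne_top, aux_int b lam hl, ENNReal.ofReal_mul hD0]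
    _ = _ := by
        congr 1
        have : (∏ j, (2 * lam j)) * ∏ j, (Real.pi / lam j) = (2 * Real.pi) ^ n := by
          rw [← Finset.prod_mul_distrib]
          rw [Finset.prod_congr rfl (g := fun _ => 2 * Real.pi)]
          · simp
          · intro j _
            have := (hl j).ne'
            field_simp
        rw [hD, ← this]; ring

lemma aux_conv {n : ℕ} (g f : SchwartzMap (Euc n) ℂ) (y : Euc n) :
    ‖∫ ξ, Complex.exp (↑(2 * Real.pi * ⟪ξ, y⟫_ℝ) * Complex.I) * g ξ * 𝓕 (⇑f) ξ‖ₑ ≤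
      (∫⁻ x, ‖𝓕 (⇑g) x‖ₑ) * eLpNorm (⇑f) ⊤ volume := by
  set h : Euc n → ℂ := fun ξ => Complex.exp (↑(2 * Real.pi * ⟪ξ, y⟫_ℝ) * Complex.I) * g ξ with hh
  have hi : Integrable h := by
    refine (g.integrable (μ := volume)).norm.mono' ?_ ?_
    · exact Continuous.aestronglyMeasurable (by have := g.continuous; fun_prop)
    · refine Filter.Eventually.of_forall fun ξ => ?_
      simp only [hh, norm_mul, Complex.norm_exp_ofReal_mul_I, one_mul, le_refl]
  have hF : ∀ z, 𝓕 h z = 𝓕 (⇑g) (z - y) := by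
    intro z
    rw [Real.fourier_eq', Real.fourier_eq']
    congr 1; ext ξ
    simp only [hh, smul_eq_mul, ← mul_assoc, ← Complex.exp_add]
    congr 2
    rw [inner_sub_right]; push_cast; ring
  have e1 : ∫ ξ, h ξ * 𝓕 (⇑f) ξ = ∫ z, 𝓕 (⇑g) (z - y) * f z := by
    have := VectorFourier.integral_fourierIntegral_smul_eq_flip (μ := volume) (ν := volume)
      (e := Real.fourierChar) (L := innerₗ (Euc n)) (f := h) (g := ⇑f) Real.continuous_fourierChar
      continuous_inner hi f.integrable
    rw [flip_innerₗ] at this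
    simp only [smul_eq_mul] at this
    refine this.symm.trans ?_
    congr 1; ext z
    rw [← hF z]; rfl
  rw [e1]
  refine (enorm_integral_le_lintegral_enorm _).trans ?_
  calc ∫⁻ z, ‖𝓕 (⇑g) (z - y) * f z‖ₑ
      ≤ ∫⁻ z, ‖𝓕 (⇑g) (z - y)‖ₑ * eLpNorm (⇑f) ⊤ volume := by
        refine lintegral_mono_ae ?_
        rw [eLpNorm_exponent_top]
        filter_upwards [enorm_ae_le_eLpNormEssSup (⇑f) volume] with z hz
        rw [enorm_mul]
        gcongr
    _ = _ := by
        have hc : Continuous fun z => ‖𝓕 (⇑g) (z - y)‖ₑ := by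
          have := (𝓕 g).continuous
          rw [SchwartzMap.fourier_coe] at this
          fun_prop
        rw [lintegral_mul_const _ hc.measurable,
          lintegral_sub_right_eq_self (fun z => ‖𝓕 (⇑g) z‖ₑ) y]

/-- the `M^∞` kernel estimate `‖m[a]‖_{M^∞(ℝⁿ)} ≤ C σ` for symbols with
thin `s`-support, frequency support in a box adapted to an orthonormal basis and matching
derivative bounds.  The constant depends only on `n`, `χ` and the constants `cst`. -/
theorem statement19 (n : ℕ) (hn : 1 ≤ n)
    (c₁ c₂ : ℝ) (hc : c₁ < c₂)
    (χ : ℝ → ℝ) (hχ : ContDiff ℝ (⊤ : ℕ∞) χ) (hχc : HasCompactSupport χ)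
    (hχs : tsupport χ ⊆ Set.Icc c₁ c₂)
    (cst : ℕ → ℝ) :
    ∃ C : ℝ, 0 < C ∧
    ∀ γ : ℝ → Euc n, ContDiff ℝ (⊤ : ℕ∞) γ →
    ∀ a : Euc n → ℝ → ℂ,
      ContDiff ℝ (⊤ : ℕ∞) (fun q : Euc n × ℝ => a q.1 q.2) →
      HasCompactSupport (fun q : Euc n × ℝ => a q.1 q.2) →
      (∀ ξ s, a ξ s ≠ 0 → s ∈ Set.Icc c₁ c₂) →
    ∀ σ : ℝ, 0 < σ →
    ∀ lam : Fin n → ℝ, (∀ j, 0 < lam j) →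
    ∀ v : Fin n → Euc n, Orthonormal ℝ v →
      volume {s : ℝ | ∃ ξ, a ξ s ≠ 0} ≤ ENNReal.ofReal σ →
      (∀ ξ s, a ξ s ≠ 0 → ∀ j, |⟪ξ, v j⟫_ℝ| ≤ lam j) →
      (∀ N : ℕ, ∀ j : Fin n, ∀ (ξ : Euc n) (s : ℝ),
        ‖(fun G : Euc n → ℂ => fun ζ => fderiv ℝ G ζ (v j))^[N] (fun ζ => a ζ s) ξ‖ ≤
          cst N * (lam j ^ N)⁻¹) →
    ∀ f : SchwartzMap (Euc n) ℂ,
      eLpNorm (𝓕⁻ (fun ξ => symbMult γ χ a ξ * 𝓕 (⇑f) ξ)) ⊤ volume ≤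
        ENNReal.ofReal (C * σ) * eLpNorm (⇑f) ⊤ volume := by
  classical
  obtain ⟨M, hM⟩ := hχc.exists_bound_of_continuous hχ.continuous
  have hM0 : 0 ≤ M := (norm_nonneg _).trans (hM 0)
  set L : ℝ := 2 ^ n * (|cst 0| + |cst (2 * n)|) * (2 * Real.pi) ^ n with hL
  have hL0 : 0 ≤ L := by have := Real.pi_pos; positivity
  refine ⟨M * L + 1, by positivity, ?_⟩
  intro γ hγ a ha hac _ σ hσ lam hl v hv hvol hbox hder f
  have : Nonempty (Fin n) := ⟨⟨0, hn⟩⟩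
  obtain ⟨b, hb⟩ : ∃ b : OrthonormalBasis (Fin n) ℝ (Euc n), ∀ j, b j = v j := by
    have hcard : Fintype.card (Fin n) = Module.finrank ℝ (Euc n) := by simp
    refine ⟨(basisOfOrthonormalOfCardEqFinrank hv hcard).toOrthonormalBasis (by simpa using hv), ?_⟩
    intro j; simp
  -- slices are Schwartz functions
  have hsl : ∀ s, ∃ g : SchwartzMap (Euc n) ℂ, ⇑g = fun ζ => a ζ s := by
    intro s
    have h1 : HasCompactSupport fun ζ => a ζ s := by
      refine HasCompactSupport.intro (hac.image continuous_fst) fun ζ hζ => ?_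
      by_contra h0
      exact hζ ⟨(ζ, s), subset_tsupport _ h0, rfl⟩
    have h2 : ContDiff ℝ (⊤ : ℕ∞) fun ζ => a ζ s :=
      ha.comp (contDiff_id.prodMk contDiff_const)
    exact ⟨h1.toSchwartzMap h2, rfl⟩
  choose g hg using hsl
  have hg' : ∀ s ζ, g s ζ = a ζ s := fun s ζ => congrFun (hg s) ζ
  have hL1 : ∀ s, ∫⁻ x, ‖𝓕 (⇑(g s)) x‖ₑ ≤ ENNReal.ofReal L := by
    intro s
    refine aux_L1 hn b lam hl (g s) cst ?_ ?_
    · intro ξ h j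
      rw [hb]; rw [hg'] at h
      exact hbox ξ s h j
    · intro N j ξ
      rw [hb, hg]
      exact hder N j ξ s
  have hfc : Continuous (𝓕 (⇑f)) := by
    have := (𝓕 f).continuous
    rwa [SchwartzMap.fourier_coe] at this
  rw [eLpNorm_exponent_top (f := 𝓕⁻ (fun ξ => symbMult γ χ a ξ * 𝓕 (⇑f) ξ))]
  refine essSup_le_of_ae_le _ (Filter.Eventually.of_forall fun x => ?_)
  show ‖𝓕⁻ (fun ξ => symbMult γ χ a ξ * 𝓕 (⇑f) ξ) x‖ₑ ≤ _
  set F : Euc n → ℝ → ℂ := fun ξ s =>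
    Complex.exp (↑(2 * Real.pi * ⟪ξ, x⟫_ℝ) * Complex.I) *
      ((Complex.exp (-(⟪γ s, ξ⟫_ℝ : ℂ) * Complex.I) * a ξ s * (χ s : ℂ)) * 𝓕 (⇑f) ξ) with hF
  have e1 : 𝓕⁻ (fun ξ => symbMult γ χ a ξ * 𝓕 (⇑f) ξ) x = ∫ ξ, ∫ s, F ξ s := by
    rw [Real.fourierInv_eq']
    congr 1; funext ξ
    rw [smul_eq_mul, symbMult, ← integral_mul_const, ← integral_const_mul]
  have hFi : Integrable (Function.uncurry F) (volume.prod volume) := by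
    refine Continuous.integrable_of_hasCompactSupport ?_ ?_
    · have h1 := ha.continuous
      have h2 := hγ.continuous
      have h3 := hχ.continuous
      simp only [hF, Function.uncurry_def]
      fun_prop
    · refine HasCompactSupport.intro hac fun q hq => ?_
      have h0 : a q.1 q.2 = 0 := image_eq_zero_of_notMem_tsupport (f := fun q : Euc n × ℝ => a q.1 q.2) hq
      simp [hF, Function.uncurry_def, h0]
  have e2 : ∀ s, ∫ ξ, F ξ s = (χ s : ℂ) * ∫ ξ, Complex.exp
      (↑(2 * Real.pi * ⟪ξ, x - (2 * Real.pi)⁻¹ • γ s⟫_ℝ) * Complex.I) * g s ξ * 𝓕 (⇑f) ξ := by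
    intro s
    rw [← integral_const_mul]
    congr 1; funext ξ
    have : Complex.exp (↑(2 * Real.pi * ⟪ξ, x - (2 * Real.pi)⁻¹ • γ s⟫_ℝ) * Complex.I) =
        Complex.exp (↑(2 * Real.pi * ⟪ξ, x⟫_ℝ) * Complex.I) *
        Complex.exp (-(⟪γ s, ξ⟫_ℝ : ℂ) * Complex.I) := by
      rw [← Complex.exp_add]
      congr 1
      rw [← add_mul, inner_sub_right, inner_smul_right, real_inner_comm ξ (γ s)]
      have hp : 2 * Real.pi * (⟪ξ, x⟫_ℝ - (2 * Real.pi)⁻¹ * ⟪ξ, γ s⟫_ℝ) =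
          2 * Real.pi * ⟪ξ, x⟫_ℝ + - ⟪ξ, γ s⟫_ℝ := by
        have := Real.pi_pos.ne'
        field_simp
        ring
      rw [hp]; push_cast; ring
    rw [this, hg']
    simp only [hF]; ring
  rw [e1, integral_integral_swap hFi]
  refine (enorm_integral_le_lintegral_enorm _).trans ?_
  set E := eLpNorm (⇑f) ⊤ volume with hE
  calc ∫⁻ s, ‖∫ ξ, F ξ s‖ₑ
      ≤ ∫⁻ s, {s : ℝ | ∃ ξ, a ξ s ≠ 0}.indicator
          (fun _ => ENNReal.ofReal M * (ENNReal.ofReal L * E)) s := by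
        refine lintegral_mono fun s => ?_
        by_cases hs : s ∈ {s : ℝ | ∃ ξ, a ξ s ≠ 0}
        · rw [Set.indicator_of_mem hs, e2, enorm_mul]
          gcongr
          · rw [← ofReal_norm]
            refine ENNReal.ofReal_le_ofReal ?_
            rw [Complex.norm_real]; exact hM s
          · refine (aux_conv (g s) f _).trans ?_
            gcongr
            exact hL1 s
        · have h0 : ∀ ξ, a ξ s = 0 := by
            intro ξ; by_contra h; exact hs ⟨ξ, h⟩
          simp [hF, h0]
    _ ≤ ENNReal.ofReal M * (ENNReal.ofReal L * E) * volume {s : ℝ | ∃ ξ, a ξ s ≠ 0} :=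
        lintegral_indicator_const_le _ _
    _ ≤ ENNReal.ofReal M * (ENNReal.ofReal L * E) * ENNReal.ofReal σ := by gcongr
    _ = ENNReal.ofReal (M * L * σ) * E := by
        rw [ENNReal.ofReal_mul (p := M * L) (mul_nonneg hM0 hL0), ENNReal.ofReal_mul (p := M) hM0]; ring
    _ ≤ _ := by
        refine mul_le_mul_left (ENNReal.ofReal_le_ofReal ?_) _
        nlinarith
end
end
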